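/- arXiv:0811.3702 — 11 statements merged into one kernel-verified Lean document; each statement's English description precedes it below -/
import Mathlib

section
/- A Jordan algebra J over a field K of characteristic zero admits a nondegenerate symmetric associative bilinear form (i.e., J is pseudo-euclidean) if and only if its adjoint and coadjoint representations are equivalent, that is, if and only if there exists a linear isomorphism φ : J → J* (J* the dual space) such that φ(x·y)(z) = φ(y)(x·z) for all x, y, z ∈ J. -/
/-!
Since the product is commutative, `φ (x * y) z = φ y (x * z)` says that `φ`, read as a bilinear form
`b`, is associative, so the only thing at stake is its symmetry. Associativity and commutativity
already give `b (x * y) z = b z (x * y)`: the products lie in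
`W = {x | b x y = b y x for all y}`. The restriction of `b` to `W × J` extends to a symmetric form
on `J`. As the radical of that form meets `W` trivially, adding a nondegenerate symmetric form on
the radical, pulled back along a projection that kills `W`, makes it nondegenerate. The result
agrees with `b` on the products, and so inherits the associativity of `b`.
-/

open LinearMap (BilinForm)

section SymmetricExtension

theorem isSymm_basisToDual {R M ι : Type*} [CommSemiring R] [AddCommMonoid M] [Module R M]
    [DecidableEq ι] (e : Module.Basis ι R M) : BilinForm.IsSymm e.toDual := by
  have h : e.toDual = e.toDual.flip :=
    e.ext fun i => e.ext fun j => by simp [Module.Basis.toDual_apply, eq_comm]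
  exact ⟨LinearMap.congr_fun₂ h⟩

variable {R V : Type*} [CommRing R] [AddCommGroup V] [Module R V]

theorem exists_isSymm_extending_of_isCompl {W C : Submodule R V} (hWC : IsCompl W C)
    (b : W →ₗ[R] V →ₗ[R] R) (hb : ∀ w w' : W, b w w' = b w' w) :
    ∃ s : BilinForm R V, s.IsSymm ∧ ∀ w : W, s w = b w := by
  let q := W.projectionOnto C hWC
  have hq : ∀ w : W, q w = w := Submodule.projectionOnto_apply_left hWC
  -- `b` on `W × V` plus its transpose on `V × W`, minus the part on `W × W` counted twice
  let s : BilinForm R V := b ∘ₗ q + (b ∘ₗ q).flip - b.compl₁₂ q (W.subtype ∘ₗ q)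
  have hs : ∀ x y, s x y = b (q x) y + b (q y) x - b (q x) (q y) := fun _ _ => rfl
  refine ⟨s, ⟨fun x y => ?_⟩, fun w => LinearMap.ext fun y => ?_⟩
  · rw [hs, hs, hb (q x), add_comm]
  · rw [hs, hq, hb w, add_sub_cancel_right]

theorem exists_isSymm_separatingLeft_of_isCompl_ker {c : BilinForm R V} (hc : c.IsSymm)
    [Module.Free R (LinearMap.ker c)] {C : Submodule R V} (hC : IsCompl (LinearMap.ker c) C) :
    ∃ s : BilinForm R V, s.IsSymm ∧ s.SeparatingLeft ∧ ∀ x ∈ C, s x = c x := by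
  classical
  let e := Module.Free.chooseBasis R (LinearMap.ker c)
  let p := (LinearMap.ker c).projectionOnto C hC
  let s : BilinForm R V := c + e.toDual.compl₁₂ p p
  have hs : ∀ x y, s x y = c x y + e.toDual (p x) (p y) := fun _ _ => rfl
  have hsymm : s.IsSymm :=
    ⟨fun x y => by rw [hs, hs, hc.eq, (isSymm_basisToDual e).eq]⟩
  have hs_ker : ∀ x (r : LinearMap.ker c), s x r = e.toDual (p x) r := fun x r => by
    rw [hs, hc.eq, LinearMap.mem_ker.1 r.2, LinearMap.zero_apply, zero_add,
      Submodule.projectionOnto_apply_left]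
  have hs_compl : ∀ x ∈ C, s x = c x := fun x hx => LinearMap.ext fun y => by
    rw [hs, Submodule.projectionOnto_apply_of_mem_right hC hx, map_zero, LinearMap.zero_apply,
      add_zero]
  refine ⟨s, hsymm, LinearMap.separatingLeft_iff_linear_nontrivial.2 fun x hx => ?_, hs_compl⟩
  have hpx : p x = 0 := e.toDual_inj _ <| LinearMap.ext fun r => by
    rw [← hs_ker, hx, LinearMap.zero_apply, LinearMap.zero_apply]
  have hxC : x ∈ C := (Submodule.projectionOnto_apply_eq_zero_iff hC).1 hpx
  have hx_ker : x ∈ LinearMap.ker c := LinearMap.mem_ker.2 ((hs_compl x hxC).symm.trans hx)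
  exact Submodule.disjoint_def.1 hC.disjoint x hx_ker hxC

variable {K U : Type*} [Field K] [AddCommGroup U] [Module K U]

theorem exists_isSymm_separatingLeft_extending {W : Submodule K U} {b : W →ₗ[K] U →ₗ[K] K}
    (hb : b.SeparatingLeft) (hb_symm : ∀ w w' : W, b w w' = b w' w) :
    ∃ s : BilinForm K U, s.IsSymm ∧ s.SeparatingLeft ∧ ∀ w : W, s w = b w := by
  obtain ⟨C, hWC⟩ := exists_isCompl W
  obtain ⟨c, hc, hcb⟩ := exists_isSymm_extending_of_isCompl hWC b hb_symm
  have hdisj : Disjoint W (LinearMap.ker c) := Submodule.disjoint_def.2 fun x hxW hxc =>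
    congr_arg Subtype.val <| LinearMap.separatingLeft_iff_linear_nontrivial.1 hb ⟨x, hxW⟩ <|
      (hcb ⟨x, hxW⟩).symm.trans (LinearMap.mem_ker.1 hxc)
  obtain ⟨D, hWD, hD⟩ := hdisj.exists_isCompl
  obtain ⟨s, hs, hs_sep, hsc⟩ := exists_isSymm_separatingLeft_of_isCompl_ker hc hD.symm
  exact ⟨s, hs, hs_sep, fun w => (hsc w (hWD w.2)).trans (hcb w)⟩

theorem exists_isSymm_separatingLeft_eq_of_forall_comm {b : BilinForm K U}
    (hb : b.SeparatingLeft) :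
    ∃ s : BilinForm K U, s.IsSymm ∧ s.SeparatingLeft ∧
      ∀ x, (∀ y, b x y = b y x) → s x = b x := by
  let W : Submodule K U := LinearMap.ker (b - b.flip)
  have hW : ∀ {x}, x ∈ W ↔ ∀ y, b x y = b y x := by
    simp [W, LinearMap.ext_iff, sub_eq_zero]
  obtain ⟨s, hs, hs_sep, hsb⟩ := exists_isSymm_separatingLeft_extending (b := b.domRestrict W)
    (fun w hw => Subtype.ext (hb w hw)) fun w w' => hW.1 w.2 w'
  exact ⟨s, hs, hs_sep, fun x hx => hsb ⟨x, hW.2 hx⟩⟩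

end SymmetricExtension

/-- Associativity (also called invariance) of a bilinear form on a module with a multiplication.
Symmetry is not part of the notion: it also describes the maps `φ : J → J*` intertwining the adjoint
and coadjoint representations of a commutative algebra. -/
def IsAssociativeForm {R J : Type*} [CommSemiring R] [AddCommMonoid J] [Module R J] [Mul J]
    (B : BilinForm R J) : Prop :=
  ∀ x y z : J, B (x * y) z = B x (y * z)

section CommMagma

variable {R J : Type*} [CommSemiring R] [AddCommMonoid J] [Module R J] [CommMagma J]
  {B : BilinForm R J}

theorem isAssociativeForm_iff_apply_mul_eq_apply_mul_left :
    IsAssociativeForm B ↔ ∀ x y z : J, B (x * y) z = B y (x * z) := by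
  unfold IsAssociativeForm
  rw [forall_comm]
  simp only [mul_comm]

theorem IsAssociativeForm.apply_mul_comm (hB : IsAssociativeForm B) (x y z : J) :
    B (x * y) z = B z (x * y) :=
  calc B (x * y) z = B x (z * y) := by rw [hB, mul_comm y]
    _ = B (z * x) y := by rw [← hB, mul_comm x]
    _ = B z (x * y) := hB z x y

theorem IsAssociativeForm.of_isSymm_of_eq_on_mul (hB : IsAssociativeForm B) {s : BilinForm R J}
    (hs : s.IsSymm) (hsB : ∀ x y : J, s (x * y) = B (x * y)) : IsAssociativeForm s :=
  fun x y z => calc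
    s (x * y) z = B x (y * z) := by rw [hsB, hB]
    _ = B (y * z) x := (hB.apply_mul_comm y z x).symm
    _ = s x (y * z) := by rw [← hsB, hs.eq]

end CommMagma

theorem IsAssociativeForm.exists_isSymm_separatingLeft {K J : Type*} [Field K] [AddCommGroup J]
    [Module K J] [CommMagma J] {B : BilinForm K J} (hB : IsAssociativeForm B)
    (hB_sep : B.SeparatingLeft) :
    ∃ s : BilinForm K J, s.IsSymm ∧ s.SeparatingLeft ∧ IsAssociativeForm s := by
  obtain ⟨s, hs, hs_sep, hsB⟩ := exists_isSymm_separatingLeft_eq_of_forall_comm hB_sep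
  exact ⟨s, hs, hs_sep,
    hB.of_isSymm_of_eq_on_mul hs fun x y => hsB (x * y) (hB.apply_mul_comm x y)⟩

theorem pseudoEuclidean_iff_adjoint_equiv_coadjoint_general
    {K : Type*} [Field K] {J : Type*} [AddCommGroup J] [CommMagma J] [Module K J]
    [FiniteDimensional K J] :
    (∃ B : J →ₗ[K] J →ₗ[K] K,
        (∀ x y : J, B x y = B y x) ∧
        (∀ x : J, (∀ y : J, B x y = 0) → x = 0) ∧
        (∀ x y z : J, B (x * y) z = B x (y * z))) ↔
      (∃ φ : J ≃ₗ[K] Module.Dual K J, ∀ x y z : J, φ (x * y) z = φ y (x * z)) := by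
  constructor
  · rintro ⟨B, -, hB_sep, hB⟩
    have hB_nondeg : B.Nondegenerate := BilinForm.Nondegenerate.ofSeparatingLeft hB_sep
    exact ⟨BilinForm.toDual B hB_nondeg, isAssociativeForm_iff_apply_mul_eq_apply_mul_left.1 hB⟩
  · rintro ⟨φ, hφ⟩
    have hφ_sep : φ.toLinearMap.SeparatingLeft :=
      LinearMap.separatingLeft_iff_ker_eq_bot.2 φ.ker
    have hφ_assoc : IsAssociativeForm φ.toLinearMap :=
      isAssociativeForm_iff_apply_mul_eq_apply_mul_left.2 hφ
    obtain ⟨s, hs, hs_sep, hs_assoc⟩ := hφ_assoc.exists_isSymm_separatingLeft hφ_sep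
    exact ⟨s, hs.eq, hs_sep, hs_assoc⟩

/-- A Jordan algebra `J` over a field `K` of characteristic zero admits a
nondegenerate symmetric associative bilinear form (i.e. `J` is pseudo-euclidean) if and
only if its adjoint and coadjoint representations are equivalent, i.e. iff there is a
linear isomorphism `φ : J ≃ J*` with `φ (x*y) z = φ y (x*z)` for all `x y z`. -/
theorem pseudoEuclidean_iff_adjoint_equiv_coadjoint
    {K : Type*} [Field K] [CharZero K]
    {J : Type*} [NonUnitalNonAssocCommRing J] [Module K J]
    [SMulCommClass K J J] [IsScalarTower K J J] [FiniteDimensional K J]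
    (hjordan : ∀ x y : J, (x * y) * (x * x) = x * (y * (x * x))) :
    (∃ B : J →ₗ[K] J →ₗ[K] K,
        (∀ x y : J, B x y = B y x) ∧
        (∀ x : J, (∀ y : J, B x y = 0) → x = 0) ∧
        (∀ x y z : J, B (x * y) z = B x (y * z))) ↔
      (∃ φ : J ≃ₗ[K] Module.Dual K J, ∀ x y z : J, φ (x * y) z = φ y (x * z)) :=
  pseudoEuclidean_iff_adjoint_equiv_coadjoint_general
end

section
/- Let (J, B) be a pseudo-euclidean Jordan algebra. Then there exist finitely many ideals J₁, …, J_r of J such that J = J₁ ⊕ … ⊕ J_r as vector spaces, with: (i) the restriction of B to each Jᵢ × Jᵢ is nondegenerate; (ii) each Jᵢ, with the restricted bilinear form, contains no nondegenerate ideal other than {0} and Jᵢ itself; (iii) B(Jᵢ, Jⱼ) = {0} whenever i ≠ j. -/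
/-!
Split off nondegenerate ideals one at a time. If `I` is a minimal nonzero nondegenerate ideal
contained in a nondegenerate ideal `M`, then `M` is the orthogonal direct sum of `I` and `M ⊓ Iᗮ`,
and the latter is again a nondegenerate ideal because `B` is associative. Minimality among the
ideals of `J` already gives irreducibility of `I` as an algebra: since `J = I ⊕ Iᗮ` and
`I * Iᗮ ⊆ I ⊓ Iᗮ = 0`, every ideal of `I` is an ideal of `J`.

Nondegeneracy of `B` on a subspace `I` is expressed as `Disjoint I (B.orthogonal I)`.
-/

open LinearMap (BilinForm)

section BilinForm

variable {R V : Type*} [CommSemiring R] [AddCommMonoid V] [Module R V] {B : BilinForm R V}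

theorem disjoint_orthogonal_iff (hB : B.IsRefl) {I : Submodule R V} :
    Disjoint I (B.orthogonal I) ↔ ∀ a ∈ I, (∀ b ∈ I, B a b = 0) → a = 0 := by
  simp only [Submodule.disjoint_def, BilinForm.mem_orthogonal_iff, hB.eq_iff]

theorem orthogonal_sup (I I' : Submodule R V) :
    B.orthogonal (I ⊔ I') = B.orthogonal I ⊓ B.orthogonal I' := by
  refine le_antisymm (le_inf (BilinForm.orthogonal_le le_sup_left)
    (BilinForm.orthogonal_le le_sup_right)) ?_
  rintro x ⟨hx, hx'⟩ y hy
  obtain ⟨a, ha, b, hb, rfl⟩ := Submodule.mem_sup.1 hy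
  rw [map_add, LinearMap.add_apply, hx a ha, hx' b hb, add_zero]

theorem le_orthogonal_comm (hB : B.IsRefl) {I I' : Submodule R V} :
    I ≤ B.orthogonal I' ↔ I' ≤ B.orthogonal I :=
  ⟨fun h _ hb _ ha => hB _ _ (h ha _ hb), fun h _ ha _ hb => hB _ _ (h hb _ ha)⟩

theorem inf_orthogonal_lt {I M : Submodule R V} (hI : Disjoint I (B.orthogonal I)) (hIM : I ≤ M)
    (hne : I ≠ ⊥) : M ⊓ B.orthogonal I < M :=
  inf_lt_left.2 fun hle => hne (hI.eq_bot_of_le (hIM.trans hle))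

theorem iSupIndep_of_pairwise_le_orthogonal {ι : Type*} {N : ι → Submodule R V}
    (hN : ∀ i, Disjoint (N i) (B.orthogonal (N i)))
    (horth : Pairwise fun i j => N j ≤ B.orthogonal (N i)) : iSupIndep N :=
  fun i => (hN i).mono_right (iSup₂_le fun _ hj => horth hj.symm)

end BilinForm

theorem sup_inf_eq_of_codisjoint {α : Type*} [Lattice α] [OrderTop α] [IsModularLattice α]
    {a b c : α} (hab : Codisjoint a b) (hac : a ≤ c) : a ⊔ c ⊓ b = c := by
  rw [inf_comm, ← sup_inf_assoc_of_le b hac, hab.eq_top, top_inf_eq]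

theorem disjoint_orthogonal_inf_orthogonal {R V : Type*} [CommRing R] [AddCommGroup V]
    [Module R V] {B : BilinForm R V} {I M : Submodule R V} (hM : Disjoint M (B.orthogonal M))
    (hI : Codisjoint I (B.orthogonal I)) (hIM : I ≤ M) :
    Disjoint (M ⊓ B.orthogonal I) (B.orthogonal (M ⊓ B.orthogonal I)) := by
  have horth : B.orthogonal M = B.orthogonal I ⊓ B.orthogonal (M ⊓ B.orthogonal I) := by
    rw [← orthogonal_sup, sup_inf_eq_of_codisjoint hI hIM]
  rw [horth, disjoint_iff, ← inf_assoc] at hM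
  exact disjoint_iff.2 hM

theorem exists_finset_minimal_pairwise_orthogonal {K V : Type*} [Field K] [AddCommGroup V]
    [Module K V] [FiniteDimensional K V] {B : BilinForm K V} (hB : B.IsRefl)
    {P : Submodule K V → Prop} (hinf : ∀ I I', P I → P I' → P (I ⊓ I'))
    (horth : ∀ I, P I → P (B.orthogonal I)) (M : Submodule K V) (hPM : P M)
    (hM : Disjoint M (B.orthogonal M)) :
    ∃ S : Finset (Submodule K V), sSup (S : Set (Submodule K V)) = M ∧
      (∀ N ∈ S, Minimal (fun I => I ≠ ⊥ ∧ P I ∧ Disjoint I (B.orthogonal I)) N) ∧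
      (S : Set (Submodule K V)).Pairwise fun N N' => N' ≤ B.orthogonal N := by
  classical
  induction M using WellFoundedLT.induction with
  | ind M ih =>
    rcases eq_or_ne M ⊥ with rfl | hne
    · exact ⟨∅, by simp⟩
    obtain ⟨N, hNM, hNmin⟩ := exists_minimal_le_of_wellFoundedLT
      (fun I => I ≠ ⊥ ∧ P I ∧ Disjoint I (B.orthogonal I)) M ⟨hne, hPM, hM⟩
    obtain ⟨hN0, hPN, hN⟩ := hNmin.prop
    have hcompl := (BilinForm.isCompl_orthogonal_iff_disjoint hB).2 hN
    obtain ⟨S, hsup, hmin, hpair⟩ := ih (M ⊓ B.orthogonal N) (inf_orthogonal_lt hN hNM hN0)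
      (hinf _ _ hPM (horth _ hPN)) (disjoint_orthogonal_inf_orthogonal hM hcompl.codisjoint hNM)
    have hSN : ∀ N' ∈ S, N' ≤ B.orthogonal N := fun N' hN' =>
      (le_sSup (Finset.mem_coe.2 hN')).trans (hsup.trans_le inf_le_right)
    refine ⟨insert N S, ?_, (Finset.forall_mem_insert _ _ _).2 ⟨hNmin, hmin⟩, ?_⟩
    · rw [Finset.coe_insert, sSup_insert, hsup, sup_inf_eq_of_codisjoint hcompl.codisjoint hNM]
    · rw [Finset.coe_insert]
      exact hpair.insert fun N' hN' _ => ⟨hSN N' hN', (le_orthogonal_comm hB).1 (hSN N' hN')⟩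

/-- `I` is stable under multiplication by elements of `M` on either side. For `M = ⊤` this says that
`I` is a two-sided ideal of `J`, and for `I ≤ M` that `I` is an ideal of the subalgebra `M`. -/
def IsIdealOf {R J : Type*} [Semiring R] [NonUnitalNonAssocSemiring J] [Module R J]
    (I M : Submodule R J) : Prop :=
  ∀ x ∈ M, ∀ a ∈ I, x * a ∈ I ∧ a * x ∈ I

theorem isIdealOf_iff_mul_mem {R J : Type*} [Semiring R] [NonUnitalNonAssocCommSemiring J]
    [Module R J] {I M : Submodule R J} : IsIdealOf I M ↔ ∀ x ∈ M, ∀ a ∈ I, x * a ∈ I := by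
  simp only [IsIdealOf, mul_comm, and_self]

namespace IsIdealOf

theorem inf {R J : Type*} [Semiring R] [NonUnitalNonAssocSemiring J] [Module R J]
    {I I' M : Submodule R J} (hI : IsIdealOf I M) (hI' : IsIdealOf I' M) : IsIdealOf (I ⊓ I') M :=
  fun x hx a ha =>
    ⟨⟨(hI x hx a ha.1).1, (hI' x hx a ha.2).1⟩, ⟨(hI x hx a ha.1).2, (hI' x hx a ha.2).2⟩⟩

variable {R J : Type*} [CommSemiring R] [NonUnitalNonAssocSemiring J] [Module R J]
  {B : BilinForm R J} {I M : Submodule R J}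

theorem orthogonal (hB : B.IsRefl) (hassoc : ∀ x y z, B (x * y) z = B x (y * z))
    (hI : IsIdealOf I ⊤) : IsIdealOf (B.orthogonal I) ⊤ := by
  refine fun x hx a ha => ⟨fun b hb => ?_, fun b hb => hB _ _ ?_⟩
  · rw [← hassoc]
    exact ha _ (hI x hx b hb).2
  · rw [hassoc]
    exact hB _ _ (ha _ (hI x hx b hb).1)

theorem trans_of_isCompl_orthogonal (hB : B.IsRefl) (hassoc : ∀ x y z, B (x * y) z = B x (y * z))
    (hI : IsIdealOf I M) (hcompl : IsCompl M (B.orthogonal M)) (hM : IsIdealOf M ⊤)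
    (hIM : I ≤ M) : IsIdealOf I ⊤ := by
  intro x _ a ha
  obtain ⟨m, hm, p, hp, rfl⟩ := Submodule.mem_sup.1 (hcompl.sup_eq_top.ge (trivial : x ∈ ⊤))
  have hpM := hM p trivial a (hIM ha)
  have hpM' := hM.orthogonal hB hassoc a trivial p hp
  have hpa : p * a = 0 := Submodule.disjoint_def.1 hcompl.disjoint _ hpM.1 hpM'.2
  have hap : a * p = 0 := Submodule.disjoint_def.1 hcompl.disjoint _ hpM.2 hpM'.1
  rw [add_mul, mul_add, hpa, hap, add_zero, add_zero]
  exact hI m hm a ha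

end IsIdealOf

theorem eq_bot_or_eq_of_minimal_ideal {K J : Type*} [Field K] [NonUnitalNonAssocRing J]
    [Module K J] [FiniteDimensional K J] {B : BilinForm K J} (hB : B.IsRefl)
    (hassoc : ∀ x y z, B (x * y) z = B x (y * z)) {I N : Submodule K J}
    (hN : Minimal (fun I => I ≠ ⊥ ∧ IsIdealOf I ⊤ ∧ Disjoint I (B.orthogonal I)) N)
    (hIN : I ≤ N) (hI : IsIdealOf I N) (hI' : Disjoint I (B.orthogonal I)) : I = ⊥ ∨ I = N := by
  obtain ⟨-, hNJ, hN'⟩ := hN.prop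
  have hcompl := (BilinForm.isCompl_orthogonal_iff_disjoint hB).2 hN'
  refine or_iff_not_imp_left.2 fun h0 => ?_
  exact hN.eq_of_le ⟨h0, hI.trans_of_isCompl_orthogonal hB hassoc hcompl hNJ hIN, hI'⟩ hIN

theorem pseudoEuclidean_decomposition_general {K J : Type*} [Field K] [NonUnitalNonAssocRing J]
    [Module K J] [FiniteDimensional K J] {B : BilinForm K J} (hB : B.IsRefl)
    (hnondeg : ∀ x, (∀ y, B x y = 0) → x = 0)
    (hassoc : ∀ x y z, B (x * y) z = B x (y * z)) :
    ∃ (r : ℕ) (Ji : Fin r → Submodule K J),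
      DirectSum.IsInternal Ji ∧
      (∀ i, IsIdealOf (Ji i) ⊤) ∧
      (∀ i, ∀ a ∈ Ji i, (∀ b ∈ Ji i, B a b = 0) → a = 0) ∧
      (∀ i, ∀ I ≤ Ji i, IsIdealOf I (Ji i) →
        (∀ a ∈ I, (∀ b ∈ I, B a b = 0) → a = 0) → I = ⊥ ∨ I = Ji i) ∧
      (∀ i j, i ≠ j → ∀ a ∈ Ji i, ∀ b ∈ Ji j, B a b = 0) := by
  simp only [← disjoint_orthogonal_iff hB]
  obtain ⟨S, hsup, hmin, horth⟩ := exists_finset_minimal_pairwise_orthogonal hB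
    (P := fun I => IsIdealOf I ⊤) (fun _ _ => IsIdealOf.inf)
    (fun _ => IsIdealOf.orthogonal hB hassoc) ⊤ (fun _ _ _ _ => ⟨trivial, trivial⟩)
    ((disjoint_orthogonal_iff hB).2 fun a _ ha => hnondeg a fun b => ha b trivial)
  let e : Fin S.card ≃ S := S.equivFin.symm
  have hminimal i := hmin (e i) (e i).2
  have hpair : Pairwise fun i j => (e j : Submodule K J) ≤ B.orthogonal (e i) := fun i j hij =>
    horth (e i).2 (e j).2 fun h => hij (e.injective (Subtype.ext h))
  have htop : ⨆ i, (e i : Submodule K J) = ⊤ := by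
    rw [e.iSup_comp (g := fun N : S => (N : Submodule K J)), ← hsup, sSup_eq_iSup']
    rfl
  exact ⟨S.card, fun i => e i,
    DirectSum.isInternal_submodule_of_iSupIndep_of_iSup_eq_top
      (iSupIndep_of_pairwise_le_orthogonal (fun i => (hminimal i).prop.2.2) hpair) htop,
    fun i => (hminimal i).prop.2.1, fun i => (hminimal i).prop.2.2,
    fun i _ => eq_bot_or_eq_of_minimal_ideal hB hassoc (hminimal i),
    fun _ _ hij a ha _ hb => hpair hij hb a ha⟩

/-- Every pseudo-euclidean Jordan algebra `(J, B)` decomposes as an orthogonal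
direct sum `J = J₁ ⊕ … ⊕ J_r` of nondegenerate `B`-irreducible ideals. -/
theorem pseudoEuclidean_decomposition
    {K : Type*} [Field K] [CharZero K]
    {J : Type*} [NonUnitalNonAssocCommRing J] [Module K J]
    [SMulCommClass K J J] [IsScalarTower K J J] [FiniteDimensional K J]
    (hjordan : ∀ x y : J, (x * y) * (x * x) = x * (y * (x * x)))
    (B : J →ₗ[K] J →ₗ[K] K)
    (hsymm : ∀ x y : J, B x y = B y x)
    (hnondeg : ∀ x : J, (∀ y : J, B x y = 0) → x = 0)
    (hassoc : ∀ x y z : J, B (x * y) z = B x (y * z)) :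
    ∃ (r : ℕ) (Ji : Fin r → Submodule K J),
      -- `J` is the (internal) direct sum of the `Ji`
      DirectSum.IsInternal Ji ∧
      -- each `Ji` is an ideal of `J`
      (∀ i, ∀ x : J, ∀ a ∈ Ji i, x * a ∈ Ji i) ∧
      -- (i) the restriction of `B` to each `Ji × Ji` is nondegenerate
      (∀ i, ∀ a ∈ Ji i, (∀ b ∈ Ji i, B a b = 0) → a = 0) ∧
      -- (ii) each `Ji` contains no nondegenerate ideal other than `{0}` and `Ji`
      (∀ i, ∀ I : Submodule K J, I ≤ Ji i →
        (∀ x ∈ Ji i, ∀ a ∈ I, x * a ∈ I) →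
        (∀ a ∈ I, (∀ b ∈ I, B a b = 0) → a = 0) →
        I = ⊥ ∨ I = Ji i) ∧
      -- (iii) `B(Ji, Jj) = {0}` for `i ≠ j`
      (∀ i j, i ≠ j → ∀ a ∈ Ji i, ∀ b ∈ Ji j, B a b = 0) := by
  simpa only [isIdealOf_iff_mul_mem, Submodule.mem_top, true_imp_iff] using
    pseudoEuclidean_decomposition_general (fun x y h => (hsymm y x).trans h) hnondeg hassoc
end

section
/- Let (J, B) be a pseudo-euclidean Jordan algebra. Then: (1) the B-orthogonal complement of the annihilator Ann(J) equals J² (the linear span of all products xy, x, y ∈ J); (2) the B-orthogonal complement of the center Z(J) equals the linear span (J, J, J) of all associators (x, y, z) = (xy)z − x(yz). -/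
/-!
Associativity of `B` gives `B(uv, c) = B(u, vc)` and, for associators,
`B((u, v, t), c) = -B(u, (v, t, c))`. By nondegeneracy, `c` is orthogonal to all products exactly
when `vc = 0` for all `v`, and to all associators exactly when `(v, t, c) = 0` for all `v`, `t`; in
a commutative algebra the latter already makes `c` central. In finite dimension the span of a set is
the orthogonal of its orthogonal, which yields both claims.
-/

theorem mem_span_iff_forall_apply_eq_zero {K V W : Type*} [Field K] [AddCommGroup V] [Module K V]
    [AddCommGroup W] [Module K W] {B : V →ₗ[K] W →ₗ[K] K} (hB : Function.Surjective B.flip)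
    {S : Set V} {x : V} :
    x ∈ Submodule.span K S ↔ ∀ c : W, (∀ s ∈ S, B s c = 0) → B x c = 0 := by
  have mem_dualAnnihilator_span (f : Module.Dual K V) :
      f ∈ (Submodule.span K S).dualAnnihilator ↔ ∀ s ∈ S, f s = 0 :=
    Set.ext_iff.mp (Submodule.coe_dualAnnihilator_span S) f
  rw [← Subspace.forall_mem_dualAnnihilator_apply_eq_zero_iff, hB.forall]
  simp only [mem_dualAnnihilator_span, LinearMap.flip_apply]

theorem flip_bijective_of_separatingLeft {K V W : Type*} [Field K] [AddCommGroup V] [Module K V]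
    [AddCommGroup W] [Module K W] [FiniteDimensional K W]
    {B : V →ₗ[K] W →ₗ[K] K} (hrank : Module.finrank K V = Module.finrank K W)
    (hsep : B.SeparatingLeft) : Function.Bijective B.flip := by
  have injective : Function.Injective B :=
    LinearMap.ker_eq_bot.mp (LinearMap.separatingLeft_iff_ker_eq_bot.mp hsep)
  have : FiniteDimensional K V := FiniteDimensional.of_injective B injective
  have surjective : Function.Surjective B :=
    (LinearMap.injective_iff_surjective_of_finrank_eq_finrank
      (hrank.trans Subspace.dual_finrank_eq.symm)).mp injective
  exact LinearMap.flip_bijective_iff₁.mpr ⟨injective, surjective⟩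

section AssociativeForm

variable {K J : Type*} [CommRing K] [NonUnitalNonAssocRing J] [Module K J] {B : J →ₗ[K] J →ₗ[K] K}

theorem forall_apply_mul_eq_zero_iff (hsep : B.SeparatingRight)
    (hassoc : ∀ x y z : J, B (x * y) z = B x (y * z)) {c : J} :
    (∀ u v : J, B (u * v) c = 0) ↔ ∀ v : J, v * c = 0 := by
  simp only [hassoc]
  exact ⟨fun h v => hsep _ fun u => h u v, fun h u v => by rw [h, map_zero]⟩

theorem apply_associator_left (hassoc : ∀ x y z : J, B (x * y) z = B x (y * z)) (u v t c : J) :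
    B (associator u v t) c = -B u (associator v t c) := by
  simp only [associator_apply, map_sub, LinearMap.sub_apply, hassoc, neg_sub]

theorem forall_apply_associator_eq_zero_iff (hsep : B.SeparatingRight)
    (hassoc : ∀ x y z : J, B (x * y) z = B x (y * z)) {c : J} :
    (∀ u v t : J, B (associator u v t) c = 0) ↔ ∀ v t : J, associator v t c = 0 := by
  simp only [apply_associator_left hassoc, neg_eq_zero]
  exact ⟨fun h v t => hsep _ fun u => h u v t, fun h u v t => by rw [h, map_zero]⟩

end AssociativeForm

theorem forall_assoc_iff_forall_right_assoc {M : Type*} [CommMagma M] {c : M} :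
    (∀ y z : M, (c * y) * z = c * (y * z) ∧ (y * c) * z = y * (c * z) ∧
      (y * z) * c = y * (z * c)) ↔ ∀ y z : M, (y * z) * c = y * (z * c) := by
  refine ⟨fun h y z => (h y z).2.2, fun h y z => ?_⟩
  have left_assoc (a b : M) : c * (a * b) = (c * a) * b := by
    rw [mul_comm c, mul_comm a, h, mul_comm b, mul_comm a]
  have central : IsMulCentral c := ⟨fun a => mul_comm c a, left_assoc, h⟩
  exact ⟨(left_assoc y z).symm, central.mid_assoc y z, h y z⟩

/-- The right annihilator `{a | J * a = 0}` and the right nucleus `{c | (J, J, c) = 0}` take the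
place of `Ann(J)` and `Z(J)`, with which they agree when `J` is commutative. -/
theorem perp_ann_eq_square_and_perp_center_eq_associators_general
    {K J : Type*} [Field K] [NonUnitalNonAssocRing J] [Module K J] [FiniteDimensional K J]
    {B : J →ₗ[K] J →ₗ[K] K} (hsep : B.SeparatingLeft)
    (hassoc : ∀ x y z : J, B (x * y) z = B x (y * z)) :
    (∀ x : J, (∀ a : J, (∀ y : J, y * a = 0) → B x a = 0) ↔
      x ∈ Submodule.span K {z : J | ∃ u v : J, z = u * v}) ∧
    (∀ x : J, (∀ c : J, (∀ y z : J, associator y z c = 0) → B x c = 0) ↔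
      x ∈ Submodule.span K {w : J | ∃ u v t : J, w = associator u v t}) := by
  have flip_bijective := flip_bijective_of_separatingLeft rfl hsep
  have hsep_right : B.SeparatingRight :=
    LinearMap.separatingRight_iff_flip_ker_eq_bot.mpr (LinearMap.ker_eq_bot.mpr flip_bijective.1)
  simp only [mem_span_iff_forall_apply_eq_zero flip_bijective.2]
  refine ⟨fun x => forall_congr' fun a => imp_congr_left ?_,
    fun x => forall_congr' fun c => imp_congr_left ?_⟩
  · rw [← forall_apply_mul_eq_zero_iff hsep_right hassoc]
    exact ⟨fun h _ ⟨u, v, hz⟩ => hz ▸ h u v, fun h u v => h _ ⟨u, v, rfl⟩⟩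
  · rw [← forall_apply_associator_eq_zero_iff hsep_right hassoc]
    exact ⟨fun h _ ⟨u, v, t, hw⟩ => hw ▸ h u v t, fun h u v t => h _ ⟨u, v, t, rfl⟩⟩

/-- In a pseudo-euclidean Jordan algebra `(J, B)`:
(1) the `B`-orthogonal of the annihilator `Ann(J)` equals `J²`;
(2) the `B`-orthogonal of the center `Z(J)` equals the span of all associators. -/
theorem perp_ann_eq_square_and_perp_center_eq_associators
    {K : Type*} [Field K] [CharZero K]
    {J : Type*} [NonUnitalNonAssocCommRing J] [Module K J]
    [SMulCommClass K J J] [IsScalarTower K J J] [FiniteDimensional K J]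
    (hjordan : ∀ x y : J, (x * y) * (x * x) = x * (y * (x * x)))
    (B : J →ₗ[K] J →ₗ[K] K)
    (hsymm : ∀ x y : J, B x y = B y x)
    (hnondeg : ∀ x : J, (∀ y : J, B x y = 0) → x = 0)
    (hassoc : ∀ x y z : J, B (x * y) z = B x (y * z)) :
    -- (1) `Ann(J)⊥ = J²`
    (∀ x : J,
      (∀ a : J, (∀ y : J, a * y = 0) → B x a = 0) ↔
        x ∈ Submodule.span K {z : J | ∃ u v : J, z = u * v}) ∧
    -- (2) `Z(J)⊥ = (J, J, J)`
    (∀ x : J,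
      (∀ c : J, (∀ y z : J,
          (c * y) * z = c * (y * z) ∧ (y * c) * z = y * (c * z) ∧
            (y * z) * c = y * (z * c)) → B x c = 0) ↔
        x ∈ Submodule.span K {w : J | ∃ u v t : J, w = (u * v) * t - u * (v * t)}) := by
  obtain ⟨perp_ann, perp_nucleus⟩ :=
    perp_ann_eq_square_and_perp_center_eq_associators_general hnondeg hassoc
  refine ⟨by simpa only [mul_comm] using perp_ann, ?_⟩
  simpa only [forall_assoc_iff_forall_right_assoc, associator_apply, sub_eq_zero] using perp_nucleus
end

section
/- Let J be a Jordan algebra over a field K of characteristic zero, J* its dual space, R_x the multiplication operator R_x(y) = xy, and θ : J × J → J* a bilinear map. Equip the vector space J ⊕ J* with the product (x + f)(y + h) = xy + h∘R_x + f∘R_y + θ(x, y) for x, y ∈ J, f, h ∈ J*. Then: (1) this product makes J ⊕ J* a Jordan algebra if and only if θ is symmetric and satisfies θ(xy, x²) + θ(x, x)∘R_{xy} + θ(x, y)∘R_{x²} = θ(x, yx²) + θ(y, x²)∘R_x + θ(x, x)∘R_y∘R_x for all x, y ∈ J; (2) in that case, the symmetric bilinear form B(x + f, y + h) = f(y) +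 h(x) on J ⊕ J* is an associative scalar product if and only if θ(x, y)(z) = θ(z, x)(y) for all x, y, z ∈ J. -/
variable {K : Type*} [Field K] [CharZero K]
variable {J : Type*} [NonUnitalNonAssocCommRing J] [Module K J]
  [SMulCommClass K J J] [IsScalarTower K J J] [FiniteDimensional K J]

/-- The product of the `T*`-extension on `J ⊕ J*`:
`(x + f)(y + h) = xy + h∘R_x + f∘R_y + θ(x, y)`. -/
noncomputable def tstarMul (θ : J →ₗ[K] J →ₗ[K] Module.Dual K J)
    (p q : J × Module.Dual K J) : J × Module.Dual K J :=
  (p.1 * q.1,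
    q.2.comp (LinearMap.mulLeft K p.1) + p.2.comp (LinearMap.mulLeft K q.1) + θ p.1 q.1)

/-- The canonical hyperbolic bilinear form `B (x + f, y + h) = f y + h x` on `J ⊕ J*`. -/
noncomputable def tstarForm (p q : J × Module.Dual K J) : K :=
  p.2 q.1 + q.2 p.1

/-!
Evaluated at `z`, the dual component of the Jordan identity for `x + f`, `y + g` in `J ⊕ J*` splits
into a part in `θ`, a part in `f` and a part in `g`. The part in `g` is the Jordan identity of `J`,
and the part in `f` is its linearization
`2 R_x R_{xy} + R_y R_{x²} = 2 R_x R_y R_x + R_{y x²}`, so exactly the condition on `θ` remains.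
-/

section JordanAlgebra

variable {A : Type*} [NonUnitalNonAssocCommRing A] [IsCommJordan A]

theorem jordan_identity_linearized (h2 : IsSMulRegular A 2) (x y z : A) :
    (z * y) * (x * x) + 2 • ((x * y) * (x * z)) =
      z * (y * (x * x)) + 2 • (x * (y * (x * z))) := by
  have hlie : 2 • ((x * ((x * z) * y) - (x * z) * (x * y)) +
      (x * ((z * x) * y) - (z * x) * (x * y)) +
      (z * ((x * x) * y) - (x * x) * (z * y))) = 0 :=
    DFunLike.congr_fun (two_nsmul_lie_lmul_lmul_add_add_eq_zero x x z) y
  have hlie' := h2.right_eq_zero_of_smul hlie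
  rw [mul_comm z x, mul_comm (x * z) y, mul_comm (x * z) (x * y), mul_comm (x * x) y,
    mul_comm (x * x) (z * y)] at hlie'
  rw [eq_comm, ← sub_eq_zero, ← hlie']
  abel

theorem jordan_operator_identity (h2 : IsSMulRegular A 2) (x y z : A) :
    2 • (x * ((x * y) * z)) + y * ((x * x) * z) =
      2 • (x * (y * (x * z))) + (y * (x * x)) * z := by
  have hyz := jordan_identity_linearized h2 x y z
  have hzy := jordan_identity_linearized h2 x z y
  rw [mul_comm y z, mul_comm (x * z) (x * y), hyz] at hzy
  rw [mul_comm (x * y) z, mul_comm (x * x) z, mul_comm (y * (x * x)) z, add_comm, ← hzy, add_comm]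

end JordanAlgebra

section TStarExtension

variable {F A : Type*} [Field F] [NonUnitalNonAssocCommRing A] [Module F A]

section Product

variable [SMulCommClass F A A] (θ : A →ₗ[F] A →ₗ[F] Module.Dual F A)

/-- The compatibility of a bilinear map `θ : J × J → J*` with the Jordan identity:
`θ(xy, x²) + θ(x, x)∘R_{xy} + θ(x, y)∘R_{x²} = θ(x, yx²) + θ(y, x²)∘R_x + θ(x, x)∘R_y∘R_x`.
Symmetry of `θ` is not part of the definition. -/
def IsJordanCocycle : Prop :=
  ∀ x y : A,
    θ (x * y) (x * x) + (θ x x).comp (LinearMap.mulLeft F (x * y)) +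
        (θ x y).comp (LinearMap.mulLeft F (x * x)) =
      θ x (y * (x * x)) + (θ y (x * x)).comp (LinearMap.mulLeft F x) +
        (θ x x).comp ((LinearMap.mulLeft F y).comp (LinearMap.mulLeft F x))

theorem tstarMul_fst (p q : A × Module.Dual F A) : (tstarMul θ p q).1 = p.1 * q.1 := rfl

theorem tstarMul_snd_apply (p q : A × Module.Dual F A) (z : A) :
    (tstarMul θ p q).2 z = q.2 (p.1 * z) + p.2 (q.1 * z) + θ p.1 q.1 z := rfl

theorem tstarMul_comm_iff :
    (∀ p q, tstarMul θ p q = tstarMul θ q p) ↔ ∀ x y : A, θ x y = θ y x := by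
  constructor
  · intro hcomm x y
    simpa [tstarMul] using congrArg Prod.snd (hcomm (x, 0) (y, 0))
  · intro hθ p q
    refine Prod.ext (mul_comm _ _) ?_
    simp only [tstarMul, hθ p.1 q.1, add_comm (q.2.comp _)]

variable {θ}

theorem isJordanCocycle_of_tstarMul_jordan
    (hmul : ∀ p q, tstarMul θ (tstarMul θ p q) (tstarMul θ p p) =
      tstarMul θ p (tstarMul θ q (tstarMul θ p p))) :
    IsJordanCocycle θ := by
  intro x y
  ext z
  have hz := LinearMap.congr_fun (congrArg Prod.snd (hmul (x, 0) (y, 0))) z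
  simp only [tstarMul_fst, tstarMul_snd_apply, LinearMap.zero_apply] at hz
  simp only [LinearMap.add_apply, LinearMap.comp_apply, LinearMap.mulLeft_apply]
  linear_combination hz

theorem IsJordanCocycle.tstarMul_jordan [NeZero (2 : F)] [IsCommJordan A]
    (hθ : IsJordanCocycle θ) (p q : A × Module.Dual F A) :
    tstarMul θ (tstarMul θ p q) (tstarMul θ p p) =
      tstarMul θ p (tstarMul θ q (tstarMul θ p p)) := by
  obtain ⟨x, f⟩ := p
  obtain ⟨y, g⟩ := q
  refine Prod.ext (IsCommJordan.lmul_comm_rmul_rmul x y) (LinearMap.ext fun z => ?_)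
  have h2 : IsSMulRegular A 2 := fun a b hab =>
    smul_right_injective A (two_ne_zero (α := F)) (by simpa only [two_smul] using hab)
  have hθz := LinearMap.congr_fun (hθ x y) z
  have hf := congrArg f (jordan_operator_identity h2 x y z)
  have hg : g ((x * x) * (x * z)) = g (x * ((x * x) * z)) := by
    rw [mul_comm (x * x) (x * z), mul_comm (x * x) z, IsCommJordan.lmul_comm_rmul_rmul]
  simp only [map_add, map_nsmul, nsmul_eq_mul, Nat.cast_ofNat] at hf
  simp only [LinearMap.add_apply, LinearMap.comp_apply, LinearMap.mulLeft_apply] at hθz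
  simp only [tstarMul_fst, tstarMul_snd_apply]
  linear_combination hθz + hf - hg

end Product

theorem tstarForm_comm (p q : A × Module.Dual F A) : tstarForm p q = tstarForm q p :=
  add_comm _ _

theorem eq_zero_of_forall_tstarForm_eq_zero {p : A × Module.Dual F A}
    (hp : ∀ q, tstarForm p q = 0) : p = 0 := by
  refine Prod.ext ((Module.forall_dual_apply_eq_zero_iff F p.1).1 fun f => ?_)
    (LinearMap.ext fun x => ?_)
  · simpa [tstarForm] using hp (0, f)
  · simpa [tstarForm] using hp (x, 0)

theorem tstarForm_associative_iff [SMulCommClass F A A]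
    (θ : A →ₗ[F] A →ₗ[F] Module.Dual F A) :
    (∀ p q s, tstarForm (tstarMul θ p q) s = tstarForm p (tstarMul θ q s)) ↔
      ∀ x y z : A, θ x y z = θ z x y := by
  constructor
  · intro hassoc x y z
    simpa [tstarForm, tstarMul] using (hassoc (z, 0) (x, 0) (y, 0)).symm
  · intro hcyclic p q s
    simp only [tstarForm, tstarMul_fst, tstarMul_snd_apply]
    rw [mul_comm s.1 p.1, mul_comm q.1 p.1, ← hcyclic q.1 s.1 p.1]
    ring

theorem tstar_extension_general [SMulCommClass F A A] [NeZero (2 : F)] [IsCommJordan A]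
    (θ : A →ₗ[F] A →ₗ[F] Module.Dual F A) :
    (((∀ p q, tstarMul θ p q = tstarMul θ q p) ∧
      (∀ p q, tstarMul θ (tstarMul θ p q) (tstarMul θ p p) =
          tstarMul θ p (tstarMul θ q (tstarMul θ p p)))) ↔
      ((∀ x y : A, θ x y = θ y x) ∧ IsJordanCocycle θ)) ∧
    (((∀ p q : A × Module.Dual F A, tstarForm p q = tstarForm q p) ∧
      (∀ p : A × Module.Dual F A, (∀ q, tstarForm p q = 0) → p = 0) ∧
      (∀ p q s : A × Module.Dual F A,
        tstarForm (tstarMul θ p q) s = tstarForm p (tstarMul θ q s))) ↔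
      (∀ x y z : A, θ x y z = θ z x y)) := by
  refine ⟨and_congr (tstarMul_comm_iff θ)
    ⟨isJordanCocycle_of_tstarMul_jordan, IsJordanCocycle.tstarMul_jordan⟩, ?_⟩
  rw [← tstarForm_associative_iff θ]
  exact ⟨fun h => h.2.2, fun hassoc =>
    ⟨tstarForm_comm, fun _ => eq_zero_of_forall_tstarForm_eq_zero, hassoc⟩⟩

end TStarExtension

/-- T*-extension: (1) the product above makes `J ⊕ J*` a Jordan algebra iff
`θ` is symmetric and satisfies identity (id1); (2) in that case, the bilinear form
`B(x+f, y+h) = f y + h x` is an associative scalar product iff `θ x y z = θ z x y`. -/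
theorem tstar_extension
    (hjordan : ∀ x y : J, (x * y) * (x * x) = x * (y * (x * x)))
    (θ : J →ₗ[K] J →ₗ[K] Module.Dual K J) :
    -- (1)
    (((∀ p q, tstarMul θ p q = tstarMul θ q p) ∧
      (∀ p q, tstarMul θ (tstarMul θ p q) (tstarMul θ p p) =
          tstarMul θ p (tstarMul θ q (tstarMul θ p p)))) ↔
      ((∀ x y : J, θ x y = θ y x) ∧
        (∀ x y : J,
          θ (x * y) (x * x) + (θ x x).comp (LinearMap.mulLeft K (x * y)) +
              (θ x y).comp (LinearMap.mulLeft K (x * x)) =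
            θ x (y * (x * x)) + (θ y (x * x)).comp (LinearMap.mulLeft K x) +
              (θ x x).comp ((LinearMap.mulLeft K y).comp (LinearMap.mulLeft K x))))) ∧
    -- (2)
    (((∀ x y : J, θ x y = θ y x) ∧
      (∀ x y : J,
        θ (x * y) (x * x) + (θ x x).comp (LinearMap.mulLeft K (x * y)) +
            (θ x y).comp (LinearMap.mulLeft K (x * x)) =
          θ x (y * (x * x)) + (θ y (x * x)).comp (LinearMap.mulLeft K x) +
            (θ x x).comp ((LinearMap.mulLeft K y).comp (LinearMap.mulLeft K x)))) →
      (((∀ p q : J × Module.Dual K J, tstarForm p q = tstarForm q p) ∧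
        (∀ p : J × Module.Dual K J, (∀ q, tstarForm p q = 0) → p = 0) ∧
        (∀ p q s : J × Module.Dual K J,
          tstarForm (tstarMul θ p q) s = tstarForm p (tstarMul θ q s))) ↔
        (∀ x y z : J, θ x y z = θ z x y))) :=
  haveI : IsCommJordan J := ⟨hjordan⟩
  ⟨(tstar_extension_general θ).1, fun _ => (tstar_extension_general θ).2⟩
end

section
/- Let J be a Jordan algebra over a field K of characteristic zero, V a finite-dimensional K-vector space, and π : J → End(V) a linear map. Equip J ⊕ V with the product (x + v)(y + w) = xy + π(x)w + π(y)v for x, y ∈ J, v, w ∈ V. Then J ⊕ V with this product is a Jordan algebra if and only if π satisfies, for all x, y ∈ J: (i) π(x²)π(x) − π(x)π(x²) = 0, and (ii) 2π(xy)π(x) + π(x²)π(y) − 2π(x)π(y)π(x) − π(x²y) = 0. -/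
variable {K : Type*} [Field K] [CharZero K]
variable {J : Type*} [NonUnitalNonAssocCommRing J] [Module K J]
  [SMulCommClass K J J] [IsScalarTower K J J] [FiniteDimensional K J]
variable {V : Type*} [AddCommGroup V] [Module K V] [FiniteDimensional K V]

/-- The semi-direct product `(x + v)(y + w) = xy + π(x)w + π(y)v` on `J ⊕ V`. -/
def piMul (π : J →ₗ[K] Module.End K V) (p q : J × V) : J × V :=
  (p.1 * q.1, π p.1 q.2 + π q.1 p.2)

/-!
At `p = x + v`, `q = y + w` the `J`-component of the Jordan identity `(pq)p² = p(qp²)` is the Jordan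
identity of `J`, and the `V`-component is additive in `(v, w)`: the coefficient of `w` is the
operator in (i) and that of `v` is the operator in (ii). Setting `v = 0` or `w = 0` separates them.
-/

section SemidirectProduct

variable {R A M : Type*} [Semiring R]

/-- The semi-direct product `(x + v)(y + w) = xy + π(x)w + π(y)v` on `A ⊕ M`, for a magma `A`
acting on a module `M` through any family `π` of endomorphisms; `piMul` is the linear case. -/
def semidirectMul [Mul A] [AddCommMonoid M] [Module R M] (π : A → Module.End R M)
    (p q : A × M) : A × M :=
  (p.1 * q.1, π p.1 q.2 + π q.1 p.2)

theorem semidirectMul_comm [CommMagma A] [AddCommMonoid M] [Module R M]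
    (π : A → Module.End R M) (p q : A × M) : semidirectMul π p q = semidirectMul π q p :=
  Prod.ext (mul_comm _ _) (add_comm _ _)

variable [CommMagma A] [AddCommGroup M] [Module R M] (π : A → Module.End R M)

theorem snd_semidirectMul_jordan_sub (x y : A) (v w : M) :
    (semidirectMul π (semidirectMul π (x, v) (y, w)) (semidirectMul π (x, v) (x, v))).2 -
        (semidirectMul π (x, v) (semidirectMul π (y, w) (semidirectMul π (x, v) (x, v)))).2 =
      (π (x * x) * π x - π x * π (x * x)) w +
        (2 • (π (x * y) * π x) + π (x * x) * π y - 2 • (π x * (π y * π x)) -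
          π ((x * x) * y)) v := by
  simp only [semidirectMul, map_add, LinearMap.sub_apply, LinearMap.add_apply,
    Module.End.mul_apply, two_smul, mul_comm (x * x) y]
  abel

theorem semidirectMul_jordan_iff (x y : A) :
    (∀ v w : M,
        semidirectMul π (semidirectMul π (x, v) (y, w)) (semidirectMul π (x, v) (x, v)) =
          semidirectMul π (x, v) (semidirectMul π (y, w) (semidirectMul π (x, v) (x, v)))) ↔
      (x * y) * (x * x) = x * (y * (x * x)) ∧
        π (x * x) * π x - π x * π (x * x) = 0 ∧
          2 • (π (x * y) * π x) + π (x * x) * π y - 2 • (π x * (π y * π x)) -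
            π ((x * x) * y) = 0 := by
  constructor
  · intro h
    have hsnd (v w : M) :
        (π (x * x) * π x - π x * π (x * x)) w +
          (2 • (π (x * y) * π x) + π (x * x) * π y - 2 • (π x * (π y * π x)) -
            π ((x * x) * y)) v = 0 :=
      (snd_semidirectMul_jordan_sub π x y v w).symm.trans
        (sub_eq_zero.mpr (congrArg Prod.snd (h v w)))
    refine ⟨congrArg Prod.fst (h 0 0), LinearMap.ext fun w => ?_, LinearMap.ext fun v => ?_⟩
    · simpa only [map_zero, LinearMap.zero_apply, add_zero] using hsnd 0 w
    · simpa only [map_zero, LinearMap.zero_apply, zero_add] using hsnd v 0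
  · rintro ⟨hA, hcomm, hrep⟩ v w
    refine Prod.ext hA (sub_eq_zero.mp ?_)
    rw [snd_semidirectMul_jordan_sub, hcomm, hrep, LinearMap.zero_apply, LinearMap.zero_apply,
      add_zero]

theorem semidirect_jordan_iff_representation_general :
    ((∀ p q : A × M, semidirectMul π p q = semidirectMul π q p) ∧
      (∀ p q : A × M,
        semidirectMul π (semidirectMul π p q) (semidirectMul π p p) =
          semidirectMul π p (semidirectMul π q (semidirectMul π p p)))) ↔
      (∀ x y : A, (x * y) * (x * x) = x * (y * (x * x))) ∧
        (∀ x : A, π (x * x) * π x - π x * π (x * x) = 0) ∧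
          (∀ x y : A,
            2 • (π (x * y) * π x) + π (x * x) * π y - 2 • (π x * (π y * π x)) -
              π ((x * x) * y) = 0) := by
  constructor
  · rintro ⟨-, h⟩
    have hxy (x y : A) := (semidirectMul_jordan_iff π x y).mp fun v w => h (x, v) (y, w)
    exact ⟨fun x y => (hxy x y).1, fun x => (hxy x x).2.1, fun x y => (hxy x y).2.2⟩
  · rintro ⟨hA, hcomm, hrep⟩
    exact ⟨semidirectMul_comm π, fun (x, v) (y, w) =>
      (semidirectMul_jordan_iff π x y).mpr ⟨hA x y, hcomm x, hrep x y⟩ v w⟩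

end SemidirectProduct

/-- `J ⊕ V` with the product `(x + v)(y + w) = xy + π(x)w + π(y)v` is a
Jordan algebra iff `π` satisfies (i) `π(x²)π(x) = π(x)π(x²)` and
(ii) `2π(xy)π(x) + π(x²)π(y) − 2π(x)π(y)π(x) − π(x²y) = 0`. -/
theorem semidirect_jordan_iff_representation
    (hjordan : ∀ x y : J, (x * y) * (x * x) = x * (y * (x * x)))
    (π : J →ₗ[K] Module.End K V) :
    ((∀ p q : J × V, piMul π p q = piMul π q p) ∧
      (∀ p q : J × V,
        piMul π (piMul π p q) (piMul π p p) = piMul π p (piMul π q (piMul π p p)))) ↔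
      ((∀ x : J, π (x * x) * π x - π x * π (x * x) = 0) ∧
        (∀ x y : J,
          2 • (π (x * y) * π x) + π (x * x) * π y - 2 • (π x * (π y * π x)) -
              π ((x * x) * y) = 0)) := by
  exact (semidirect_jordan_iff_representation_general π).trans (and_iff_right hjordan)
end

section
/- Let (J₁, B₁) be a pseudo-euclidean Jordan algebra over a field K of characteristic zero, let (D, x₀) ∈ End(J₁) × J₁ be an admissible pair with D B₁-symmetric (B₁(D(x), y) = B₁(x, D(y)) for all x, y), and let k ∈ K. Then the vector space J̃ = Ka ⊕ J₁ ⊕ Kb endowed with the product determined by: b⋆J̃ = J̃⋆b = {0}, a⋆a = x₀ + kb, x⋆y = xy + B₁(D(x), y)b, and a⋆x = x⋆a = D(x) + B₁(x₀, x)b for x, y ∈ J₁, together with the symmetric bilinear form B defined by B = B₁ on J₁ × J₁, B(a, b) = 1, B(a, J₁) = B(b, J₁) = {0}, B(a, a) = B(b, b) = 0, is a pseudo-euclidean Jordan algebra (this is the generalized double extension of (J₁, B₁) by the one-dimensional algebra with zero product by means of (D, x₀, k)). -/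
variable {K : Type*} [Field K] [CharZero K]
variable {J : Type*} [NonUnitalNonAssocCommRing J] [Module K J]
  [SMulCommClass K J J] [IsScalarTower K J J] [FiniteDimensional K J]

/-- The generalized double extension product on `K·a ⊕ J ⊕ K·b`: an element `(α, x, β)`
represents `α a + x + β b`;
`b ⋆ J̃ = {0}`, `a ⋆ a = x₀ + k b`, `x ⋆ y = xy + B₁(Dx, y) b`,
`a ⋆ x = Dx + B₁(x₀, x) b`. -/
def gdeMul (B₁ : J →ₗ[K] J →ₗ[K] K) (D : Module.End K J) (x₀ : J) (k : K)
    (p q : K × J × K) : K × J × K :=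
  (0,
    (p.1 * q.1) • x₀ + p.1 • D q.2.1 + q.1 • D p.2.1 + p.2.1 * q.2.1,
    p.1 * q.1 * k + p.1 * B₁ x₀ q.2.1 + q.1 * B₁ x₀ p.2.1 + B₁ (D p.2.1) q.2.1)

/-- The bilinear form on `K·a ⊕ J ⊕ K·b` extending `B₁` with `B(a,b) = 1`,
`B(a,a) = B(b,b) = 0` and `a, b ⟂ J`. -/
def gdeForm (B₁ : J →ₗ[K] J →ₗ[K] K) (p q : K × J × K) : K :=
  B₁ p.2.1 q.2.1 + p.1 * q.2.2 + q.1 * p.2.2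

/-!
The form is associative for the new product, and commutativity then gives
`B((p ⋆ q) ⋆ s, r) = B(p ⋆ (r ⋆ s), q)`, so that the two sides of the Jordan identity, as operators
in `q`, are transposes of each other. Hence it suffices to verify that identity in the middle
component `J`: with `s = p ⋆ p`, the `b`-component of `(p ⋆ a) ⋆ s = p ⋆ (a ⋆ s)` is the
transposition formula at `q = r = a`, and the `b`-component for an arbitrary `q` is the pairing of
this equality with `q`. In the middle component, writing `p = α a + x + β b`, the coefficients of
the powers of `α` are exactly the Jordan identity of `J` and the admissibility conditions.
-/

lemma form_mul_mul_eq_form_mul_mul {V S : Type*} {mul : V → V → V} {form : V → V → S}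
    (hmul : ∀ p q, mul p q = mul q p) (hsymm : ∀ p q, form p q = form q p)
    (hassoc : ∀ p q r, form (mul p q) r = form p (mul q r)) (p q r s : V) :
    form (mul (mul p q) s) r = form (mul p (mul r s)) q :=
  calc
    form (mul (mul p q) s) r = form (mul p q) (mul s r) := hassoc _ _ _
    _ = form (mul r s) (mul p q) := by rw [hsymm, hmul s r]
    _ = form (mul p (mul r s)) q := by rw [← hassoc, hmul p]

variable {F A : Type*} [Field F] [NonUnitalNonAssocCommRing A] [Module F A]

/-- Admissibility of a pair `(D, x₀)`: the conditions, in the order (C1)–(C7), under which a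
one-dimensional algebra `F a` with zero product can act on the Jordan algebra `A` through
`a ⋆ x = D x` and `a ⋆ a = x₀` in a generalized double extension. -/
structure IsAdmissiblePair (D : Module.End F A) (x₀ : A) : Prop where
  map_mul_self_mul : ∀ x y : A, D ((x * x) * y) =
    (x * x) * D y + 2 • (D x * (x * y)) - 2 • (x * (D x * y))
  map_mul_map_sub : ∀ x y : A, D x * D y - D (D x * y) =
    ((1 : F) / 2) • ((x₀ * y) * x - x₀ * (y * x))
  map_base_mul : ∀ x : A, D (x₀ * x) = x₀ * D x
  mul_map_mul_self : ∀ x : A, x * D (x * x) = (x * x) * D x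
  map_map_mul_self : ∀ x : A, D (D (x * x)) =
    2 • (D x * D x) - 2 • (x * D (D x)) + x₀ * (x * x)
  map_map_map : ∀ x : A, D (D (D x)) =
    ((3 : F) / 2) • (x₀ * D x) - ((1 : F) / 2) • (x * D x₀)
  map_map_base : D (D x₀) = x₀ * x₀

/-- The middle component `α² x₀ + 2 α D x + x²` of the square of `α a + x + β b` in the generalized
double extension. -/
def gdeSq (D : Module.End F A) (x₀ : A) (α : F) (x : A) : A :=
  (α * α) • x₀ + (2 * α) • D x + x * x

namespace IsAdmissiblePair

variable {D : Module.End F A} {x₀ : A}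

lemma two_nsmul_map_mul_map_sub [NeZero (2 : F)] (h : IsAdmissiblePair D x₀) (x y : A) :
    2 • (D x * D y - D (D x * y)) = (x₀ * y) * x - x₀ * (y * x) := by
  rw [h.map_mul_map_sub, ← Nat.cast_smul_eq_nsmul F, smul_smul, Nat.cast_ofNat,
    mul_one_div_cancel two_ne_zero, one_smul]

lemma two_nsmul_map_map_map [NeZero (2 : F)] (h : IsAdmissiblePair D x₀) (x : A) :
    2 • D (D (D x)) = 3 • (x₀ * D x) - x * D x₀ := by
  rw [h.map_map_map, ← Nat.cast_smul_eq_nsmul F, smul_sub, smul_smul, smul_smul, Nat.cast_ofNat,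
    mul_div_cancel₀ _ two_ne_zero, mul_one_div_cancel two_ne_zero, one_smul, ofNat_smul_eq_nsmul]

variable [NeZero (2 : F)] [SMulCommClass F A A] [IsScalarTower F A A]

lemma smul_add_map_mul_gdeSq (h : IsAdmissiblePair D x₀) (α : F) (x : A) :
    (α • x₀ + D x) * gdeSq D x₀ α x = α • D (D (gdeSq D x₀ α x)) + x * D (gdeSq D x₀ α x) := by
  have hα₀ := h.mul_map_mul_self x
  have hα₁ := h.map_map_mul_self x
  have hα₂ := h.two_nsmul_map_map_map x
  have hα₃ := h.map_map_base
  simp only [gdeSq, map_add, map_smul, mul_add, add_mul, smul_mul_assoc, mul_smul_comm,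
    mul_comm (D x) x₀, mul_comm (D x) (x * x)]
  linear_combination (norm := module) -hα₀ - α • hα₁ - α ^ 2 • hα₂ - α ^ 3 • hα₃

lemma smul_map_add_mul_mul_gdeSq [IsCommJordan A] (h : IsAdmissiblePair D x₀) (α : F) (x y : A) :
    (α • D y + x * y) * gdeSq D x₀ α x =
      α • D (y * gdeSq D x₀ α x) + x * (y * gdeSq D x₀ α x) := by
  have hα₀ : (x * y) * (x * x) = x * ((x * x) * y) := by
    rw [IsCommJordan.lmul_comm_rmul_rmul, mul_comm y]
  have hα₁ := h.map_mul_self_mul x y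
  have hα₂ : 2 • (D x * D y - D (D x * y)) = x * (x₀ * y) - x₀ * (x * y) := by
    rw [h.two_nsmul_map_mul_map_sub, mul_comm y x, mul_comm (x₀ * y)]
  have hα₃ := h.map_base_mul y
  simp only [gdeSq, map_add, map_smul, mul_add, add_mul, smul_mul_assoc, mul_smul_comm,
    mul_comm y x₀, mul_comm y (D x), mul_comm y (x * x), mul_comm (D y) x₀, mul_comm (D y) (D x),
    mul_comm (D y) (x * x), mul_comm (x * y) x₀, mul_comm (x * y) (D x)]
  linear_combination (norm := module) hα₀ - α • hα₁ + α ^ 2 • hα₂ - α ^ 3 • hα₃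

end IsAdmissiblePair

section GeneralizedDoubleExtension

variable {B₁ : A →ₗ[F] A →ₗ[F] F} {D : Module.End F A} {x₀ : A} (k : F)

lemma gdeMul_comm (hsymm : ∀ x y, B₁ x y = B₁ y x) (hDsymm : ∀ x y, B₁ (D x) y = B₁ x (D y))
    (p q : F × A × F) : gdeMul B₁ D x₀ k p q = gdeMul B₁ D x₀ k q p := by
  have hD : B₁ (D p.2.1) q.2.1 = B₁ (D q.2.1) p.2.1 := by rw [hDsymm, hsymm]
  simp only [gdeMul, hD, mul_comm q.1 p.1, mul_comm q.2.1 p.2.1, Prod.mk.injEq, true_and]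
  constructor
  · abel
  · ring

lemma gdeForm_comm (hsymm : ∀ x y, B₁ x y = B₁ y x) (p q : F × A × F) :
    gdeForm B₁ p q = gdeForm B₁ q p := by
  rw [gdeForm, gdeForm, hsymm]
  ring

lemma gdeForm_one_zero_zero (p : F × A × F) : gdeForm B₁ p (1, 0, 0) = p.2.2 := by
  simp [gdeForm]

lemma eq_zero_of_gdeForm_eq_zero (hnondeg : ∀ x, (∀ y, B₁ x y = 0) → x = 0) (p : F × A × F)
    (hp : ∀ q, gdeForm B₁ p q = 0) : p = 0 := by
  have ha : p.1 = 0 := by simpa [gdeForm] using hp (0, 0, 1)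
  have hJ : p.2.1 = 0 := hnondeg _ fun y => by simpa [gdeForm] using hp (0, y, 0)
  have hb : p.2.2 = 0 := by rw [← gdeForm_one_zero_zero (B₁ := B₁), hp]
  exact Prod.ext ha (Prod.ext hJ hb)

lemma gdeForm_gdeMul (hsymm : ∀ x y, B₁ x y = B₁ y x)
    (hassoc : ∀ x y z, B₁ (x * y) z = B₁ x (y * z)) (hDsymm : ∀ x y, B₁ (D x) y = B₁ x (D y))
    (p q r : F × A × F) :
    gdeForm B₁ (gdeMul B₁ D x₀ k p q) r = gdeForm B₁ p (gdeMul B₁ D x₀ k q r) := by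
  simp only [gdeForm, gdeMul, map_add, map_smul, LinearMap.add_apply, LinearMap.smul_apply,
    smul_eq_mul, hassoc, hDsymm, hsymm p.2.1 x₀]
  ring

lemma gdeMul_self_snd_fst (p : F × A × F) :
    (gdeMul B₁ D x₀ k p p).2.1 = gdeSq D x₀ p.1 p.2.1 := by
  simp only [gdeMul, gdeSq]
  module

variable [NeZero (2 : F)] [SMulCommClass F A A] [IsScalarTower F A A] [IsCommJordan A]

lemma gdeMul_jordan_snd_fst (h : IsAdmissiblePair D x₀) (p q : F × A × F) :
    (gdeMul B₁ D x₀ k (gdeMul B₁ D x₀ k p q) (gdeMul B₁ D x₀ k p p)).2.1 =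
      (gdeMul B₁ D x₀ k p (gdeMul B₁ D x₀ k q (gdeMul B₁ D x₀ k p p))).2.1 := by
  obtain ⟨α, x, β⟩ := p
  obtain ⟨γ, y, δ⟩ := q
  have ha := h.smul_add_map_mul_gdeSq α x
  have hJ := h.smul_map_add_mul_mul_gdeSq α x y
  rw [← gdeMul_self_snd_fst (B₁ := B₁) k (α, x, β)] at ha hJ
  generalize hs : gdeMul B₁ D x₀ k (α, x, β) (α, x, β) = s at ha hJ ⊢
  have hs₁ : s.1 = 0 := hs ▸ rfl
  simp only [gdeMul, hs₁, mul_zero, zero_mul, zero_smul, zero_add, add_zero, map_add, map_smul,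
    mul_add, add_mul, smul_mul_assoc, mul_smul_comm] at ha hJ ⊢
  linear_combination (norm := module) γ • ha + hJ

lemma gdeMul_jordan (hsymm : ∀ x y, B₁ x y = B₁ y x)
    (hassoc : ∀ x y z, B₁ (x * y) z = B₁ x (y * z)) (hDsymm : ∀ x y, B₁ (D x) y = B₁ x (D y))
    (h : IsAdmissiblePair D x₀) (p q : F × A × F) :
    gdeMul B₁ D x₀ k (gdeMul B₁ D x₀ k p q) (gdeMul B₁ D x₀ k p p) =
      gdeMul B₁ D x₀ k p (gdeMul B₁ D x₀ k q (gdeMul B₁ D x₀ k p p)) := by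
  have hJ := gdeMul_jordan_snd_fst (B₁ := B₁) k h p
  have htranspose := form_mul_mul_eq_form_mul_mul (gdeMul_comm (x₀ := x₀) k hsymm hDsymm)
    (gdeForm_comm hsymm) (gdeForm_gdeMul k hsymm hassoc hDsymm) p
  generalize gdeMul B₁ D x₀ k p p = s at hJ ⊢
  set m := gdeMul B₁ D x₀ k
  set a : F × A × F := (1, 0, 0)
  have ha : m (m p a) s = m p (m a s) := by
    refine Prod.ext rfl (Prod.ext (hJ a) ?_)
    simpa only [a, gdeForm_one_zero_zero] using htranspose a a s
  refine Prod.ext rfl (Prod.ext (hJ q) ?_)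
  calc
    (m (m p q) s).2.2 = gdeForm B₁ (m (m p q) s) a := (gdeForm_one_zero_zero _).symm
    _ = gdeForm B₁ (m p (m a s)) q := htranspose q a s
    _ = gdeForm B₁ (m (m p a) s) q := by rw [ha]
    _ = gdeForm B₁ (m p (m q s)) a := htranspose a q s
    _ = (m p (m q s)).2.2 := gdeForm_one_zero_zero _

theorem generalized_double_extension_pseudoEuclidean_general
    (hsymm : ∀ x y, B₁ x y = B₁ y x) (hnondeg : ∀ x, (∀ y, B₁ x y = 0) → x = 0)
    (hassoc : ∀ x y z, B₁ (x * y) z = B₁ x (y * z)) (hDsymm : ∀ x y, B₁ (D x) y = B₁ x (D y))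
    (h : IsAdmissiblePair D x₀) :
    ((∀ p q, gdeMul B₁ D x₀ k p q = gdeMul B₁ D x₀ k q p) ∧
      (∀ p q, gdeMul B₁ D x₀ k (gdeMul B₁ D x₀ k p q) (gdeMul B₁ D x₀ k p p) =
        gdeMul B₁ D x₀ k p (gdeMul B₁ D x₀ k q (gdeMul B₁ D x₀ k p p)))) ∧
    ((∀ p q, gdeForm B₁ p q = gdeForm B₁ q p) ∧
      (∀ p, (∀ q, gdeForm B₁ p q = 0) → p = 0) ∧
      (∀ p q r, gdeForm B₁ (gdeMul B₁ D x₀ k p q) r = gdeForm B₁ p (gdeMul B₁ D x₀ k q r))) :=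
  ⟨⟨gdeMul_comm k hsymm hDsymm, gdeMul_jordan k hsymm hassoc hDsymm h⟩, gdeForm_comm hsymm,
    eq_zero_of_gdeForm_eq_zero hnondeg, gdeForm_gdeMul k hsymm hassoc hDsymm⟩

end GeneralizedDoubleExtension

/-- the generalized double extension of a pseudo-euclidean Jordan algebra
`(J₁, B₁)` by the one-dimensional algebra with zero product, by means of an admissible
pair `(D, x₀)` with `D` `B₁`-symmetric and `k ∈ K`, is a pseudo-euclidean Jordan algebra. -/
theorem generalized_double_extension_pseudoEuclidean
    (hjordan : ∀ x y : J, (x * y) * (x * x) = x * (y * (x * x)))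
    (B₁ : J →ₗ[K] J →ₗ[K] K)
    (hsymm : ∀ x y : J, B₁ x y = B₁ y x)
    (hnondeg : ∀ x : J, (∀ y : J, B₁ x y = 0) → x = 0)
    (hassoc : ∀ x y z : J, B₁ (x * y) z = B₁ x (y * z))
    (D : Module.End K J) (x₀ : J) (k : K)
    (hDsymm : ∀ x y : J, B₁ (D x) y = B₁ x (D y))
    -- (C1)–(C7): `(D, x₀)` is an admissible pair
    (hC1 : ∀ x y : J, D ((x * x) * y) =
      (x * x) * D y + 2 • (D x * (x * y)) - 2 • (x * (D x * y)))
    (hC2 : ∀ x y : J, D x * D y - D (D x * y) =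
      ((1 : K) / 2) • ((x₀ * y) * x - x₀ * (y * x)))
    (hC3 : ∀ x : J, D (x₀ * x) = x₀ * D x)
    (hC4 : ∀ x : J, x * D (x * x) = (x * x) * D x)
    (hC5 : ∀ x : J, D (D (x * x)) =
      2 • (D x * D x) - 2 • (x * D (D x)) + x₀ * (x * x))
    (hC6 : ∀ x : J, D (D (D x)) =
      ((3 : K) / 2) • (x₀ * D x) - ((1 : K) / 2) • (x * D x₀))
    (hC7 : D (D x₀) = x₀ * x₀) :
    -- the product is commutative and satisfies the Jordan identity
    ((∀ p q : K × J × K, gdeMul B₁ D x₀ k p q = gdeMul B₁ D x₀ k q p) ∧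
      (∀ p q : K × J × K,
        gdeMul B₁ D x₀ k (gdeMul B₁ D x₀ k p q) (gdeMul B₁ D x₀ k p p) =
          gdeMul B₁ D x₀ k p (gdeMul B₁ D x₀ k q (gdeMul B₁ D x₀ k p p)))) ∧
    -- and the bilinear form is an associative scalar product
    ((∀ p q : K × J × K, gdeForm B₁ p q = gdeForm B₁ q p) ∧
      (∀ p : K × J × K, (∀ q, gdeForm B₁ p q = 0) → p = 0) ∧
      (∀ p q s : K × J × K,
        gdeForm B₁ (gdeMul B₁ D x₀ k p q) s = gdeForm B₁ p (gdeMul B₁ D x₀ k q s))) := by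
  have : IsCommJordan J := ⟨hjordan⟩
  exact generalized_double_extension_pseudoEuclidean_general k hsymm hnondeg hassoc hDsymm
    ⟨hC1, hC2, hC3, hC4, hC5, hC6, hC7⟩
end

section
/- Let (J, B) be a pseudo-euclidean Jordan algebra over a field K of characteristic zero which is not the one-dimensional algebra with zero product, and suppose there exists b ∈ Ann(J) with b ≠ 0 and B(b, b) = 0. Then there exists a ∈ J with B(a, a) = 0 and B(a, b) = 1 such that, setting W = {x ∈ J : B(x, a) = B(x, b) = 0}: J = Ka ⊕ W ⊕ Kb as vector spaces; the restriction B_W of B to W × W is nondegenerate; for x, y ∈ W one has xy ∈ W ⊕ Kb, and writing xy = β(x, y) + α(x, y)b with β(x, y) ∈ W and α(x, y) ∈ K, the product β makes W a Jordan algebra; and there exist a B_W-symmetric endomorphism D of W, x₀ ∈ W and k ∈ K such that α(x, y) = B_W(D(x), y), ax = D(x) + B_W(x₀, x)b for all x, y ∈ W, a² = x₀ + kb, and (D, x₀) is an admissible pair of the Jordan algebra (W, β). In other words, (J, B) is the generalized double extension of the pseudo-euclidean Jordan algebra (W, B_W) by the one-dimensional algebra with zero product. -/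
/-!
Complete `b` to a hyperbolic pair `(a, b)` and let `p` be the projection along `b` onto the
orthogonal complement of `a`. Since `b` annihilates `J`, so does `x - p x`; hence
`β x y = p (x * y)` is again a Jordan product on `J`, and associativity of `B` puts all its values
in `W = {a, b}ᗮ`. The admissible pair is the pair `(L_a, a²)` formed with `β`: conditions (C1)–(C7)
hold for every element of a Jordan algebra, because they are instances of the Jordan identity and of
its linearization. The component of a product along `b` is read off by pairing with `a`.
-/

section InternalDirectSum

theorem isInternal_of_projections {ι R M : Type*} [Fintype ι] [DecidableEq ι] [Ring R]
    [AddCommGroup M] [Module R M] {A : ι → Submodule R M} (π : ι → M →ₗ[R] M)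
    (mem : ∀ i x, π i x ∈ A i) (sum_eq : ∀ x, ∑ i, π i x = x)
    (apply_eq_zero : ∀ i j, j ≠ i → ∀ x ∈ A j, π i x = 0) : DirectSum.IsInternal A := by
  rw [DirectSum.isInternal_submodule_iff_iSupIndep_and_iSup_eq_top]
  refine ⟨fun i => Submodule.disjoint_def.2 fun x hx hx' => ?_, ?_⟩
  · have hle : ⨆ j, ⨆ _ : j ≠ i, A j ≤ LinearMap.ker (π i) := iSup₂_le (apply_eq_zero i)
    calc x = ∑ j, π j x := (sum_eq x).symm
      _ = π i x := Fintype.sum_eq_single i fun j hj => apply_eq_zero j i hj.symm x hx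
      _ = 0 := hle hx'
  · refine eq_top_iff.2 fun x _ => sum_eq x ▸ Submodule.sum_mem _ fun i _ => ?_
    exact Submodule.mem_iSup_of_mem i (mem i x)

end InternalDirectSum

section JordanProduct

/-- A bilinear product making its module a Jordan algebra. This is an unbundled form of
`IsCommJordan`, for comparing two products on one module. -/
structure IsJordanProduct {R V : Type*} [CommSemiring R] [AddCommMonoid V] [Module R V]
    (β : V →ₗ[R] V →ₗ[R] V) : Prop where
  comm : ∀ x y, β x y = β y x
  jordan : ∀ x y, β (β x y) (β x x) = β x (β y (β x x))

/-- Admissible pairs `(D, x₀)` of the algebra `(V, β)`; the fields are the conditions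
(C1)–(C7). -/
structure IsAdmissiblePair_s13 {K V : Type*} [Field K] [AddCommGroup V] [Module K V]
    (β : V →ₗ[K] V →ₗ[K] V) (D : Module.End K V) (x₀ : V) : Prop where
  c1 : ∀ x y, D (β (β x x) y) =
    β (β x x) (D y) + 2 • β (D x) (β x y) - 2 • β x (β (D x) y)
  c2 : ∀ x y, β (D x) (D y) - D (β (D x) y) =
    ((1 : K) / 2) • (β (β x₀ y) x - β x₀ (β y x))
  c3 : ∀ x, D (β x₀ x) = β x₀ (D x)
  c4 : ∀ x, β x (D (β x x)) = β (β x x) (D x)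
  c5 : ∀ x, D (D (β x x)) = 2 • β (D x) (D x) - 2 • β x (D (D x)) + β x₀ (β x x)
  c6 : ∀ x, D (D (D x)) = ((3 : K) / 2) • β x₀ (D x) - ((1 : K) / 2) • β x (D x₀)
  c7 : D (D x₀) = β x₀ x₀

theorem isJordanProduct_mul (R : Type*) {J : Type*} [CommSemiring R]
    [NonUnitalNonAssocCommRing J] [Module R J] [SMulCommClass R J J] [IsScalarTower R J J]
    [IsCommJordan J] : IsJordanProduct (LinearMap.mul R J) where
  comm := mul_comm
  jordan := IsCommJordan.lmul_comm_rmul_rmul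

theorem IsJordanProduct.compr₂ {R V : Type*} [CommSemiring R] [AddCommMonoid V] [Module R V]
    {β : V →ₗ[R] V →ₗ[R] V} (hβ : IsJordanProduct β) {p : V →ₗ[R] V}
    (hp : ∀ x y, β (p x) y = β x y) : IsJordanProduct (β.compr₂ p) where
  comm x y := by simp only [LinearMap.compr₂_apply, hβ.comm x]
  jordan x y := by
    have hp' (x y : V) : β x (p y) = β x y := by rw [hβ.comm, hp, hβ.comm]
    simp only [LinearMap.compr₂_apply, hp, hp', hβ.jordan]

variable {K V : Type*} [Field K] [NeZero (2 : K)] [AddCommGroup V] [Module K V]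
  {β : V →ₗ[K] V →ₗ[K] V}

theorem IsJordanProduct.linearized (hβ : IsJordanProduct β) (a x y : V) :
    β a (β (β x x) y) =
      β (β x x) (β a y) + 2 • β (β a x) (β x y) - 2 • β x (β (β a x) y) := by
  -- The difference of the two identities below is odd in `a`: twice its linear and cubic parts.
  have h_add := hβ.jordan (x + a) y
  have h_sub := hβ.jordan (x - a) y
  have h_a := hβ.jordan a y
  refine smul_right_injective V (two_ne_zero (α := K)) ?_
  simp only [map_add, map_sub, LinearMap.add_apply, LinearMap.sub_apply, hβ.comm]
    at h_add h_sub h_a ⊢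
  linear_combination (norm := module) h_sub - h_add + (2 : K) • h_a

theorem IsJordanProduct.isAdmissiblePair (hβ : IsJordanProduct β) (a : V) :
    IsAdmissiblePair_s13 β (β a) (β a a) where
  c1 := hβ.linearized a
  c2 x y := by
    have h := hβ.linearized x a y
    rw [one_div, eq_inv_smul_iff₀ two_ne_zero]
    simp only [hβ.comm] at h ⊢
    linear_combination (norm := module) -h
  c3 x := by rw [hβ.comm (β a a) x, ← hβ.jordan, hβ.comm]
  c4 x := by rw [← hβ.jordan, hβ.comm, hβ.comm x a]
  c5 x := by
    have h := hβ.linearized a x a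
    simp only [hβ.comm] at h ⊢
    linear_combination (norm := module) h
  c6 x := by
    have h := hβ.linearized x a a
    have two_ne : (2 : K) ≠ 0 := two_ne_zero
    rw [div_eq_inv_mul, div_eq_inv_mul, mul_smul, mul_smul, ← smul_sub, eq_inv_smul_iff₀ two_ne]
    simp only [hβ.comm] at h ⊢
    linear_combination (norm := module) h
  c7 := (hβ.jordan a a).symm

end JordanProduct

section HyperbolicPair

section CommRing

variable {R V : Type*} [CommRing R] [AddCommGroup V] [Module R V]

/-- A hyperbolic pair of a bilinear form. Both mixed values are prescribed, so that the notion makes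
sense without symmetry of the form. -/
structure IsHyperbolicPair (B : LinearMap.BilinForm R V) (a b : V) : Prop where
  left_left : B a a = 0
  left_right : B a b = 1
  right_left : B b a = 1
  right_right : B b b = 0

/-- The vectors left-orthogonal to both `a` and `b`; this is `W` in the theorem. -/
abbrev pairOrthogonal (B : LinearMap.BilinForm R V) (a b : V) : Submodule R V :=
  LinearMap.ker (B.flip a) ⊓ LinearMap.ker (B.flip b)

/-- The map `x ↦ x - B(x, a) b`. If `B(b, a) = 1`, it is the projection along `b` onto
the vectors orthogonal to `a`. -/
def projAlong (B : LinearMap.BilinForm R V) (a b : V) : V →ₗ[R] V :=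
  LinearMap.id - (B.flip a).smulRight b

variable {B : LinearMap.BilinForm R V} {a b : V}

theorem mem_pairOrthogonal {x : V} : x ∈ pairOrthogonal B a b ↔ B x a = 0 ∧ B x b = 0 := by
  simp

theorem projAlong_apply (x : V) : projAlong B a b x = x - B x a • b := by
  simp [projAlong]

theorem form_projAlong_left (x : V) {y : V} (hy : B b y = 0) :
    B (projAlong B a b x) y = B x y := by
  simp [projAlong_apply, hy]

namespace IsHyperbolicPair

theorem projAlong_mem_pairOrthogonal (h : IsHyperbolicPair B a b) {x : V} (hx : B x b = 0) :
    projAlong B a b x ∈ pairOrthogonal B a b := by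
  simp [projAlong_apply, h.right_left, h.right_right, hx]

theorem sub_sub_mem_pairOrthogonal (h : IsHyperbolicPair B a b) (x : V) :
    x - B x b • a - B x a • b ∈ pairOrthogonal B a b := by
  simp [h.left_left, h.left_right, h.right_left, h.right_right]

theorem isInternal (h : IsHyperbolicPair B a b) : DirectSum.IsInternal
    ![Submodule.span R {a}, pairOrthogonal B a b, Submodule.span R {b}] := by
  let πa : V →ₗ[R] V := (B.flip b).smulRight a
  let πb : V →ₗ[R] V := (B.flip a).smulRight b
  refine isInternal_of_projections ![πa, LinearMap.id - πa - πb, πb] ?_ ?_ ?_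
  · intro i x
    fin_cases i
    · exact Submodule.smul_mem _ _ (Submodule.mem_span_singleton_self a)
    · exact h.sub_sub_mem_pairOrthogonal x
    · exact Submodule.smul_mem _ _ (Submodule.mem_span_singleton_self b)
  · intro x
    simp only [Fin.sum_univ_three, Matrix.cons_val, LinearMap.sub_apply, LinearMap.id_apply]
    abel
  · intro i j hij x hx
    fin_cases j
    · obtain ⟨c, rfl⟩ := Submodule.mem_span_singleton.1 hx
      fin_cases i <;> simp_all [πa, πb, h.left_left, h.left_right]
    · obtain ⟨hxa, hxb⟩ := mem_pairOrthogonal.1 hx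
      fin_cases i <;> simp_all [πa, πb]
    · obtain ⟨c, rfl⟩ := Submodule.mem_span_singleton.1 hx
      fin_cases i <;> simp_all [πa, πb, h.right_left, h.right_right]

theorem eq_zero_of_orthogonal (h : IsHyperbolicPair B a b) (hB : B.SeparatingLeft) {x : V}
    (hx : x ∈ pairOrthogonal B a b) (hxW : ∀ y ∈ pairOrthogonal B a b, B x y = 0) : x = 0 := by
  obtain ⟨hxa, hxb⟩ := mem_pairOrthogonal.1 hx
  refine hB x fun y => ?_
  simpa [hxa, hxb] using hxW _ (h.sub_sub_mem_pairOrthogonal y)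

end IsHyperbolicPair

end CommRing

theorem exists_isHyperbolicPair {K V : Type*} [Field K] [NeZero (2 : K)] [AddCommGroup V]
    [Module K V] {B : LinearMap.BilinForm K V} (hsymm : B.IsSymm) (hB : B.SeparatingLeft)
    {b : V} (hb : b ≠ 0) (hbb : B b b = 0) : ∃ a, IsHyperbolicPair B a b := by
  obtain ⟨y, hy⟩ : ∃ y, B b y ≠ 0 := by
    by_contra! h
    exact hb (hB b h)
  obtain ⟨c, hbc⟩ : ∃ c, B b c = 1 := ⟨(B b y)⁻¹ • y, by simp [hy]⟩
  have hcb : B c b = 1 := (hsymm.eq c b).trans hbc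
  refine ⟨c - (B c c / 2) • b, ?_, ?_, ?_, hbb⟩
  · simp [hcb, hbc, hbb, sub_sub]
  · simp [hcb, hbb]
  · simp [hbc, hbb]

end HyperbolicPair

section ProjProduct

variable {K J : Type*} [CommRing K] [NonUnitalNonAssocCommRing J] [Module K J]
  [SMulCommClass K J J] [IsScalarTower K J J]

/-- The product `(x, y) ↦ p (x * y)`, where `p` is `projAlong B a b`; on `W` it is the product `β`
of the theorem. -/
def projProduct (B : LinearMap.BilinForm K J) (a b : J) : J →ₗ[K] J →ₗ[K] J :=
  (LinearMap.mul K J).compr₂ (projAlong B a b)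

variable {B : LinearMap.BilinForm K J} {a b : J}

theorem projProduct_apply (x y : J) : projProduct B a b x y = x * y - B (x * y) a • b :=
  projAlong_apply (x * y)

theorem isJordanProduct_projProduct [IsCommJordan J] (hb : ∀ y, b * y = 0) :
    IsJordanProduct (projProduct B a b) :=
  (isJordanProduct_mul K).compr₂ fun x y => by simp [projAlong_apply, hb]

theorem IsHyperbolicPair.projProduct_mem (h : IsHyperbolicPair B a b)
    (hassoc : ∀ x y z, B (x * y) z = B x (y * z)) (hb : ∀ y, b * y = 0) (x y : J) :
    projProduct B a b x y ∈ pairOrthogonal B a b := by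
  refine h.projAlong_mem_pairOrthogonal ?_
  rw [LinearMap.mul_apply', hassoc, mul_comm, hb, map_zero]

theorem form_projProduct_left (x y : J) {z : J} (hz : B b z = 0) :
    B (projProduct B a b x y) z = B (x * y) z :=
  form_projAlong_left (x * y) hz

theorem mul_eq_projProduct_add (hsymm : B.IsSymm) (hassoc : ∀ x y z, B (x * y) z = B x (y * z))
    (x : J) {y : J} (hy : B y b = 0) :
    x * y = projProduct B a b x y + B (projProduct B a b a x) y • b := by
  have hcoeff : B (projProduct B a b a x) y = B (x * y) a := by
    rw [form_projProduct_left a x (hsymm.eq_iff.1 hy), hassoc]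
    exact hsymm.eq a (x * y)
  rw [hcoeff, projProduct_apply, sub_add_cancel]

theorem form_projProduct_symm (hsymm : B.IsSymm) (hassoc : ∀ x y z, B (x * y) z = B x (y * z))
    {x y : J} (hx : B x b = 0) (hy : B y b = 0) :
    B (projProduct B a b a x) y = B x (projProduct B a b a y) :=
  calc B (projProduct B a b a x) y = B (a * x) y := form_projProduct_left a x (hsymm.eq_iff.1 hy)
    _ = B x (a * y) := by rw [mul_comm, hassoc]
    _ = B (a * y) x := hsymm.eq x (a * y)
    _ = B (projProduct B a b a y) x := (form_projProduct_left a y (hsymm.eq_iff.1 hx)).symm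
    _ = B x (projProduct B a b a y) := hsymm.eq _ x

end ProjProduct

section DoubleExtension

variable {K J : Type*} [Field K] [NonUnitalNonAssocCommRing J] [Module K J]

/-- The relations making `J` the generalized double extension of `W = pairOrthogonal B a b`,
with product `β`, by `Ka`, by means of an admissible pair `(D, x₀)` and a scalar `k`. The maps `β`
and `D` are given on all of `J`; as `β` and `D` preserve `W`, the Jordan identity and
(C1)–(C7) restrict to `W`. -/
structure IsGeneralizedDoubleExtension (B : LinearMap.BilinForm K J) (a b : J)
    (β : J →ₗ[K] J →ₗ[K] J) (D : Module.End K J) (x₀ : J) (k : K) : Prop where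
  base_mem : x₀ ∈ pairOrthogonal B a b
  product_mem : ∀ x ∈ pairOrthogonal B a b, ∀ y ∈ pairOrthogonal B a b,
    β x y ∈ pairOrthogonal B a b
  mul_eq : ∀ x ∈ pairOrthogonal B a b, ∀ y ∈ pairOrthogonal B a b, x * y = β x y + B (D x) y • b
  isJordanProduct : IsJordanProduct β
  endo_mem : ∀ x ∈ pairOrthogonal B a b, D x ∈ pairOrthogonal B a b
  endo_symm : ∀ x ∈ pairOrthogonal B a b, ∀ y ∈ pairOrthogonal B a b, B (D x) y = B x (D y)
  mul_left_eq : ∀ x ∈ pairOrthogonal B a b, a * x = D x + B x₀ x • b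
  mul_self_eq : a * a = x₀ + k • b
  isAdmissiblePair : IsAdmissiblePair_s13 β D x₀

variable [NeZero (2 : K)] [IsCommJordan J] [SMulCommClass K J J] [IsScalarTower K J J]
  {B : LinearMap.BilinForm K J}

theorem IsHyperbolicPair.isGeneralizedDoubleExtension {a b : J} (h : IsHyperbolicPair B a b)
    (hsymm : B.IsSymm) (hassoc : ∀ x y z, B (x * y) z = B x (y * z)) (hb : ∀ y, b * y = 0) :
    IsGeneralizedDoubleExtension B a b (projProduct B a b) (projProduct B a b a)
      (projProduct B a b a a) (B (a * a) a) where
  base_mem := h.projProduct_mem hassoc hb a a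
  product_mem x _ y _ := h.projProduct_mem hassoc hb x y
  mul_eq x _ _ hy := mul_eq_projProduct_add hsymm hassoc x (mem_pairOrthogonal.1 hy).2
  isJordanProduct := isJordanProduct_projProduct hb
  endo_mem x _ := h.projProduct_mem hassoc hb a x
  endo_symm _ hx _ hy := form_projProduct_symm hsymm hassoc
    (mem_pairOrthogonal.1 hx).2 (mem_pairOrthogonal.1 hy).2
  mul_left_eq _ hx := mul_eq_projProduct_add hsymm hassoc a (mem_pairOrthogonal.1 hx).2
  mul_self_eq := by rw [projProduct_apply, sub_add_cancel]
  isAdmissiblePair := (isJordanProduct_projProduct hb).isAdmissiblePair a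

theorem generalized_double_extension_of_isotropic_ann_general (hsymm : B.IsSymm)
    (hB : B.SeparatingLeft) (hassoc : ∀ x y z, B (x * y) z = B x (y * z)) {b : J}
    (hbann : ∀ y, b * y = 0) (hbne : b ≠ 0) (hbb : B b b = 0) :
    ∃ a, B a a = 0 ∧ B a b = 1 ∧
      DirectSum.IsInternal
        ![Submodule.span K {a}, pairOrthogonal B a b, Submodule.span K {b}] ∧
      (∀ x ∈ pairOrthogonal B a b, (∀ y ∈ pairOrthogonal B a b, B x y = 0) → x = 0) ∧
      ∃ β D x₀ k, IsGeneralizedDoubleExtension B a b β D x₀ k := by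
  obtain ⟨a, h⟩ := exists_isHyperbolicPair hsymm hB hbne hbb
  exact ⟨a, h.left_left, h.left_right, h.isInternal, fun _ => h.eq_zero_of_orthogonal hB,
    _, _, _, _, h.isGeneralizedDoubleExtension hsymm hassoc hbann⟩

end DoubleExtension

/-- a pseudo-euclidean Jordan algebra `(J, B)` which is not the one-dimensional
algebra with zero product and possesses a nonzero isotropic annihilator element `b` is a
generalized double extension of a pseudo-euclidean Jordan algebra `(W, B_W)` by the
one-dimensional algebra with zero product. -/
theorem generalized_double_extension_of_isotropic_ann
    {K : Type*} [Field K] [CharZero K]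
    {J : Type*} [NonUnitalNonAssocCommRing J] [Module K J]
    [SMulCommClass K J J] [IsScalarTower K J J] [FiniteDimensional K J]
    (hjordan : ∀ x y : J, (x * y) * (x * x) = x * (y * (x * x)))
    (B : J →ₗ[K] J →ₗ[K] K)
    (hsymm : ∀ x y : J, B x y = B y x)
    (hnondeg : ∀ x : J, (∀ y : J, B x y = 0) → x = 0)
    (hassoc : ∀ x y z : J, B (x * y) z = B x (y * z))
    (hnotone : ¬ (Module.finrank K J = 1 ∧ ∀ x y : J, x * y = 0))
    (b : J) (hbann : ∀ y : J, b * y = 0) (hbne : b ≠ 0) (hbb : B b b = 0) :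
    ∃ a : J, B a a = 0 ∧ B a b = 1 ∧
      -- `W := {x | B x a = 0 ∧ B x b = 0}`
      (let W : Submodule K J := LinearMap.ker (B.flip a) ⊓ LinearMap.ker (B.flip b);
        -- `J = Ka ⊕ W ⊕ Kb`
        DirectSum.IsInternal ![Submodule.span K {a}, W, Submodule.span K {b}] ∧
        -- `B_W := B|_{W × W}` is nondegenerate
        (∀ x ∈ W, (∀ y ∈ W, B x y = 0) → x = 0) ∧
        -- the generalized double extension structure
        ∃ (β : J → J → J) (D : J → J) (x₀ : J) (k : K),
          x₀ ∈ W ∧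
          -- `β` takes values in `W` and `xy = β(x,y) + B_W(Dx, y)·b` for `x, y ∈ W`
          (∀ x ∈ W, ∀ y ∈ W, β x y ∈ W) ∧
          (∀ x ∈ W, ∀ y ∈ W, x * y = β x y + B (D x) y • b) ∧
          -- `β` is bilinear on `W` (so it is an algebra product on `W`)
          (∀ x ∈ W, ∀ x' ∈ W, ∀ y ∈ W, β (x + x') y = β x y + β x' y) ∧
          (∀ (c : K), ∀ x ∈ W, ∀ y ∈ W, β (c • x) y = c • β x y) ∧
          (∀ x ∈ W, ∀ y ∈ W, ∀ y' ∈ W, β x (y + y') = β x y + β x y') ∧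
          (∀ (c : K), ∀ x ∈ W, ∀ y ∈ W, β x (c • y) = c • β x y) ∧
          -- `β` makes `W` a Jordan algebra
          (∀ x ∈ W, ∀ y ∈ W, β x y = β y x) ∧
          (∀ x ∈ W, ∀ y ∈ W, β (β x y) (β x x) = β x (β y (β x x))) ∧
          -- `D` is a `B_W`-symmetric endomorphism of `W`
          (∀ x ∈ W, D x ∈ W) ∧
          (∀ x ∈ W, ∀ y ∈ W, D (x + y) = D x + D y) ∧
          (∀ (c : K), ∀ x ∈ W, D (c • x) = c • D x) ∧
          (∀ x ∈ W, ∀ y ∈ W, B (D x) y = B x (D y)) ∧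
          -- `a x = Dx + B_W(x₀, x)·b` and `a² = x₀ + k·b`
          (∀ x ∈ W, a * x = D x + B x₀ x • b) ∧
          a * a = x₀ + k • b ∧
          -- `(D, x₀)` is an admissible pair of `(W, β)`: (C1)–(C7)
          (∀ x ∈ W, ∀ y ∈ W, D (β (β x x) y) =
            β (β x x) (D y) + 2 • β (D x) (β x y) - 2 • β x (β (D x) y)) ∧
          (∀ x ∈ W, ∀ y ∈ W, β (D x) (D y) - D (β (D x) y) =
            ((1 : K) / 2) • (β (β x₀ y) x - β x₀ (β y x))) ∧
          (∀ x ∈ W, D (β x₀ x) = β x₀ (D x)) ∧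
          (∀ x ∈ W, β x (D (β x x)) = β (β x x) (D x)) ∧
          (∀ x ∈ W, D (D (β x x)) =
            2 • β (D x) (D x) - 2 • β x (D (D x)) + β x₀ (β x x)) ∧
          (∀ x ∈ W, D (D (D x)) =
            ((3 : K) / 2) • β x₀ (D x) - ((1 : K) / 2) • β x (D x₀)) ∧
          D (D x₀) = β x₀ x₀) := by
  have : IsCommJordan J := ⟨hjordan⟩
  obtain ⟨a, haa, hab, hint, hnd, β, D, x₀, k, h⟩ :=
    generalized_double_extension_of_isotropic_ann_general ⟨hsymm⟩ hnondeg hassoc hbann hbne hbb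
  obtain ⟨c1, c2, c3, c4, c5, c6, c7⟩ := h.isAdmissiblePair
  exact ⟨a, haa, hab, hint, hnd, fun x y => β x y, D, x₀, k, h.base_mem, h.product_mem, h.mul_eq,
    fun x _ x' _ y _ => β.map_add₂ x x' y, fun c x _ y _ => β.map_smul₂ c x y,
    fun x _ y _ y' _ => map_add (β x) y y', fun c x _ y _ => map_smul (β x) c y,
    fun x _ y _ => h.isJordanProduct.comm x y, fun x _ y _ => h.isJordanProduct.jordan x y,
    h.endo_mem, fun x _ y _ => map_add D x y, fun c x _ => map_smul D c x, h.endo_symm,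
    h.mul_left_eq, h.mul_self_eq, fun x _ y _ => c1 x y, fun x _ y _ => c2 x y,
    fun x _ => c3 x, fun x _ => c4 x, fun x _ => c5 x, fun x _ => c6 x, c7⟩
end

section
/- Let J be a Jordan algebra over a field K of characteristic zero. If J admits a bijective derivation D (a linear bijection with D(xy) = D(x)y + xD(y) for all x, y ∈ J), then J is nilpotent, i.e., there exists n ≥ 1 such that J⁽ⁿ⁾ = {0}, where J⁽¹⁾ = J and J⁽ᵏ⁾ is the linear span of all products J⁽ⁱ⁾·J⁽ʲ⁾ with i + j = k. -/
variable (K : Type*) [Field K] [CharZero K]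
variable (J : Type*) [NonUnitalNonAssocCommRing J] [Module K J]
  [SMulCommClass K J J] [IsScalarTower K J J] [FiniteDimensional K J]

/-- The series `J⁽ᵏ⁾` (shifted by one): `nser K J n = J⁽ⁿ⁺¹⁾`, where `J⁽¹⁾ = J` and
`J⁽ᵏ⁾ = span {J⁽ⁱ⁾ · J⁽ʲ⁾ : i + j = k}`. -/
def nser : ℕ → Submodule K J
  | 0 => ⊤
  | n + 1 =>
      ⨆ p : Fin (n + 1),
        Submodule.span K
          {z : J | ∃ x ∈ nser p.1, ∃ y ∈ nser (n - p.1), z = x * y}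
  termination_by n => n
  decreasing_by
  · exact p.isLt
  · omega

/-!
A surjective derivation `D` makes every multiplication `L (D y) = ⁅D, L y⁆` traceless. In a Jordan
algebra over a field of characteristic zero, tracelessness of all the `L x` forces each `L x` to be
nilpotent: the operators `2 L (xⁿ)` are the power sums of the roots of a quadratic polynomial whose
coefficients are polynomials in `L x` and `L (x²)`, and traceless power sums make the roots, hence
their sum `2 L x`, nilpotent.

Finally let the inner structure algebra `L(J) ⊕ Inn J` of the Tits-Kantor-Koecher construction act
on `J ⊕ J` through `d ± L x`. Its trace form is zero, since the sign kills the mixed terms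
`trace (d * L x)`. By Cartan's criterion the derived algebra, which contains `Inn J`, acts
nilpotently; as each `L x` is nilpotent too, Engel's theorem applies to the whole Lie algebra.
-/

open Polynomial LieAlgebra LieModule

attribute [local instance] LieRing.ofAssociativeRing

section Endomorphisms

theorem exists_isIdempotentElem_aeval_mul_X {F B : Type*} [Field F] [Ring B] [Algebra F B] {a : B}
    (ha : IsIntegral F a) :
    ∃ (p : F[X]) (m : ℕ), IsIdempotentElem (aeval a (p * X)) ∧
      a ^ m * aeval a (p * X) = a ^ m := by
  obtain ⟨q, hq, hdvd⟩ :=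
    exists_eq_pow_rootMultiplicity_mul_and_not_dvd _ (minpoly.ne_zero ha) 0
  rw [C_0, sub_zero] at hq hdvd
  set m := (minpoly F a).rootMultiplicity 0
  obtain ⟨u, v, huv⟩ : IsCoprime (X ^ (m + 1) : F[X]) q :=
    (irreducible_X.coprime_iff_not_dvd.2 hdvd).pow_left
  have aeval_eq {r s : F[X]} (t : F[X]) (h : r = s - t * (X ^ m * q)) :
      aeval a r = aeval a s := by
    rw [h, map_sub, map_mul, ← hq, minpoly.aeval, mul_zero, sub_zero]
  refine ⟨u * X ^ m, m, ?_, ?_⟩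
  · rw [IsIdempotentElem, ← map_mul]
    exact aeval_eq (u * v * X) (by linear_combination (u * X ^ (m + 1)) * huv)
  · rw [← aeval_X_pow (R := F) a, ← map_mul]
    exact aeval_eq v (by linear_combination X ^ m * huv)

theorem isNilpotent_of_trace_pow_eq_zero {F V : Type*} [Field F] [CharZero F] [AddCommGroup V]
    [Module F V] [FiniteDimensional F V] {f : Module.End F V}
    (h : ∀ n : ℕ, LinearMap.trace F V (f ^ (n + 1)) = 0) : IsNilpotent f := by
  obtain ⟨p, m, hidem, hm⟩ :=
    exists_isIdempotentElem_aeval_mul_X (Algebra.IsIntegral.isIntegral (R := F) f)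
  have htrace : LinearMap.trace F V (aeval f (p * X)) = 0 := by
    clear hidem hm
    induction p using Polynomial.induction_on' with
    | add p r hp hr => rw [add_mul, map_add, map_add, hp, hr, add_zero]
    | monomial n c =>
      rw [monomial_mul_X, aeval_monomial, ← Algebra.smul_def, map_smul, h, smul_zero]
  refine ⟨m, ?_⟩
  rw [← hm, LinearMap.IsIdempotentElem.eq_zero_of_trace_eq_zero hidem htrace, mul_zero]

section ProdMap

variable {R M N : Type*} [Semiring R] [AddCommMonoid M] [Module R M] [AddCommMonoid N]
  [Module R N]

theorem prodMap_pow (f : Module.End R M) (g : Module.End R N) (n : ℕ) :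
    f.prodMap g ^ n = (f ^ n).prodMap (g ^ n) :=
  (map_pow (LinearMap.prodMapRingHom R M N) (f, g) n).symm

theorem isNilpotent_prodMap_iff {f : Module.End R M} {g : Module.End R N} :
    IsNilpotent (f.prodMap g : Module.End R (M × N)) ↔ IsNilpotent f ∧ IsNilpotent g := by
  constructor
  · rintro ⟨n, hn⟩
    rw [prodMap_pow] at hn
    exact ⟨⟨n, LinearMap.ext fun x => congrArg Prod.fst (LinearMap.congr_fun hn (x, 0))⟩,
      ⟨n, LinearMap.ext fun y => congrArg Prod.snd (LinearMap.congr_fun hn (0, y))⟩⟩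
  · rintro ⟨⟨m, hm⟩, n, hn⟩
    refine ⟨max m n, ?_⟩
    rw [prodMap_pow, pow_eq_zero_of_le (le_max_left m n) hm,
      pow_eq_zero_of_le (le_max_right m n) hn, LinearMap.prodMap_zero]

end ProdMap

theorem exists_commute_add_eq_prodMap_mul_eq_prodMap {R M : Type*} [Ring R] [AddCommGroup M]
    [Module R M] {p q : Module.End R M} (hpq : Commute p q) :
    ∃ f g : Module.End R (M × M), Commute f g ∧ f + g = p.prodMap p ∧ f * g = q.prodMap q := by
  have hpq' (x : M) : p (q x) = q (p x) := LinearMap.congr_fun hpq x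
  -- `f` is the companion matrix of `X² - p X + q`, and `g` is its adjugate.
  let f : Module.End R (M × M) := (p.coprod (-q)).prod (LinearMap.fst R M M)
  let g : Module.End R (M × M) := (q ∘ₗ LinearMap.snd R M M).prod ((-1 : Module.End R M).coprod p)
  have hfg : f * g = q.prodMap q := by ext x <;> simp [f, g, hpq']
  have hgf : g * f = q.prodMap q := by ext x <;> simp [f, g]
  exact ⟨f, g, hfg.trans hgf.symm, by ext x <;> simp [f, g], hfg⟩

section PowerSums

variable {F V W : Type*} [Field F] [CharZero F] [AddCommGroup V] [Module F V]
  [FiniteDimensional F V] [AddCommGroup W] [Module F W] [FiniteDimensional F W]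

theorem isNilpotent_of_trace_pow_add_trace_pow_eq_zero {f : Module.End F V} {g : Module.End F W}
    (h : ∀ n : ℕ, LinearMap.trace F V (f ^ (n + 1)) + LinearMap.trace F W (g ^ (n + 1)) = 0) :
    IsNilpotent f ∧ IsNilpotent g := by
  refine isNilpotent_prodMap_iff.1 (isNilpotent_of_trace_pow_eq_zero fun n => ?_)
  rw [prodMap_pow, LinearMap.trace_prodMap', h]

/-- Here `s n` is the power sum of degree `n + 1` of the roots of `X² - p X + q`. -/
theorem isNilpotent_of_trace_powerSum_eq_zero {p q : Module.End F V} (hpq : Commute p q)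
    {s : ℕ → Module.End F V} (hs₀ : s 0 = p) (hs₁ : s 1 = p * p - 2 * q)
    (hs : ∀ n, s (n + 2) = p * s (n + 1) - q * s n) (htr : ∀ n, LinearMap.trace F V (s n) = 0) :
    IsNilpotent p := by
  obtain ⟨f, g, hfg, hadd, hmul⟩ := exists_commute_add_eq_prodMap_mul_eq_prodMap hpq
  have hpow (n : ℕ) : f ^ (n + 1) + g ^ (n + 1) = (s n).prodMap (s n) := by
    induction n using Nat.twoStepInduction with
    | zero => simpa [hs₀] using hadd
    | one =>
      calc f ^ 2 + g ^ 2 = (f + g) * (f + g) - (f * g + f * g) := by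
            rw [mul_add, add_mul, add_mul, ← hfg.eq, sq, sq]
            abel
        _ = (s 1).prodMap (s 1) := by
            rw [hadd, hmul, hs₁]
            ext x <;> simp [two_mul]
    | more n ih ih' =>
      calc f ^ (n + 3) + g ^ (n + 3)
          = (f + g) * (f ^ (n + 2) + g ^ (n + 2)) - f * g * (f ^ (n + 1) + g ^ (n + 1)) := by
            have hf : f * g * f ^ (n + 1) = g * f ^ (n + 2) := by
              rw [hfg.eq, mul_assoc, ← pow_succ']
            have hg : f * g * g ^ (n + 1) = f * g ^ (n + 2) := by rw [mul_assoc, ← pow_succ']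
            rw [mul_add (f * g), hf, hg, pow_succ' f (n + 2), pow_succ' g (n + 2)]
            noncomm_ring
        _ = (s (n + 2)).prodMap (s (n + 2)) := by
            rw [ih, ih', hadd, hmul, hs]
            ext x <;> simp
  obtain ⟨hf, hg⟩ : IsNilpotent f ∧ IsNilpotent g :=
    isNilpotent_of_trace_pow_add_trace_pow_eq_zero fun n => by
      rw [← map_add, hpow, LinearMap.trace_prodMap', htr, add_zero]
  exact (isNilpotent_prodMap_iff.1 (hadd ▸ hfg.isNilpotent_add hf hg)).1

end PowerSums

end Endomorphisms

section LieModule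

variable {R L M : Type*} [CommRing R] [LieRing L] [LieAlgebra R L] [AddCommGroup M] [Module R M]
  [LieRingModule L M] [LieModule R L M]

theorem toEnd_pow_sub_toEnd_sub_pow_mem_lcs (I : LieIdeal R L) (x : L) {d : L} (hd : d ∈ I)
    {j : ℕ} {v : M} (hv : v ∈ I.lcs M j) (n : ℕ) :
    (toEnd R L M x ^ n) v - (toEnd R L M (x - d) ^ n) v ∈ I.lcs M (j + 1) := by
  have hpow (n : ℕ) : (toEnd R L M (x - d) ^ n) v ∈ I.lcs M j := by
    induction n with
    | zero => exact hv
    | succ n ih =>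
      rw [pow_succ']
      exact (I.lcs M j).lie_mem ih
  induction n with
  | zero => simp
  | succ n ih =>
    have hsplit : (toEnd R L M x ^ (n + 1)) v - (toEnd R L M (x - d) ^ (n + 1)) v =
        ⁅x, (toEnd R L M x ^ n) v - (toEnd R L M (x - d) ^ n) v⁆ +
          ⁅d, (toEnd R L M (x - d) ^ n) v⁆ := by
      simp only [pow_succ', Module.End.mul_apply, toEnd_apply_apply, lie_sub, sub_lie]
      abel
    rw [hsplit, LieIdeal.lcs_succ]
    refine add_mem (LieSubmodule.lie_mem _ ?_) (LieSubmodule.lie_mem_lie hd (hpow n))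
    rwa [← LieIdeal.lcs_succ]

theorem isNilpotent_toEnd_of_isNilpotent_toEnd_sub (I : LieIdeal R L) [LieModule.IsNilpotent I M]
    {x d : L} (hd : d ∈ I) (hxd : IsNilpotent (toEnd R L M (x - d))) :
    IsNilpotent (toEnd R L M x) := by
  obtain ⟨k, hk⟩ := (LieModule.isNilpotent_iff R I M).1 inferInstance
  obtain ⟨m, hm⟩ := hxd
  have hmem (j : ℕ) (v : M) : ((toEnd R L M x ^ m) ^ j) v ∈ I.lcs M j := by
    induction j with
    | zero => simp
    | succ j ih =>
      have h := toEnd_pow_sub_toEnd_sub_pow_mem_lcs I x hd ih m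
      rwa [hm, LinearMap.zero_apply, sub_zero, ← Module.End.mul_apply, ← pow_succ'] at h
  refine ⟨m * k, LinearMap.ext fun v => ?_⟩
  have hv : ((toEnd R L M x ^ m) ^ k) v ∈ (I.lcs M k).toSubmodule := hmem k v
  rwa [I.coe_lcs_eq, hk, ← pow_mul] at hv

theorem isNilpotent_of_traceForm_eq_zero [CharZero R] [IsDomain R] [IsNoetherian R M]
    [Module.Free R M] (h : traceForm R L M = 0)
    (hnil : ∀ x : L, ∃ d ∈ derivedSeries R L 1, IsNilpotent (toEnd R L M (x - d))) :
    LieModule.IsNilpotent L M := by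
  have := isNilpotent_derivedSeries_of_traceForm_eq_zero h
  refine (LieModule.isNilpotent_iff_forall' (R := R)).2 fun x => ?_
  obtain ⟨d, hd, hxd⟩ := hnil x
  exact isNilpotent_toEnd_of_isNilpotent_toEnd_sub _ hd hxd

end LieModule

section Multiplications

variable {R A : Type*} [CommRing R] [NonUnitalNonAssocRing A] [Module R A]
  [SMulCommClass R A A] [IsScalarTower R A A]

theorem trace_mul_eq_zero_of_surjective_derivation (D : A →ₗ[R] A) (hD : Function.Surjective D)
    (hder : ∀ x y : A, D (x * y) = D x * y + x * D y) (x : A) :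
    LinearMap.trace R A (LinearMap.mul R A x) = 0 := by
  obtain ⟨y, rfl⟩ := hD x
  have h : LinearMap.mul R A (D y) = ⁅(D : Module.End R A), LinearMap.mul R A y⁆ := by
    ext z
    simp [LieRing.of_associative_ring_bracket, hder]
  rw [h, LinearMap.trace_lie]

theorem trace_mul_mul_eq_zero_of_isNilpotent [IsDomain R] [NeZero (2 : R)]
    (hnil : ∀ x : A, IsNilpotent (LinearMap.mul R A x)) (x y : A) :
    LinearMap.trace R A (LinearMap.mul R A x * LinearMap.mul R A y) = 0 := by
  have hsq (z : A) : LinearMap.trace R A (LinearMap.mul R A z * LinearMap.mul R A z) = 0 :=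
    (LinearMap.isNilpotent_trace_of_isNilpotent
      ((Commute.refl (LinearMap.mul R A z)).isNilpotent_mul_right (hnil z))).eq_zero
  have hpolar := hsq (x + y)
  rw [map_add, add_mul, mul_add, mul_add, map_add, map_add, map_add, hsq, hsq,
    LinearMap.trace_mul_comm R (LinearMap.mul R A y)] at hpolar
  have htwo : (2 : R) * LinearMap.trace R A (LinearMap.mul R A x * LinearMap.mul R A y) = 0 := by
    linear_combination hpolar
  exact (mul_eq_zero.1 htwo).resolve_left two_ne_zero

end Multiplications

namespace JordanAlgebra

variable {F A : Type*} [Field F] [NonUnitalNonAssocCommRing A] [Module F A] [SMulCommClass F A A]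
  [IsScalarTower F A A]

local notation "L" => LinearMap.mul F A

variable (F A) in
/-- The inner derivations of a Jordan algebra, as the span of the commutators of multiplications. -/
def innerDerivations : Submodule F (Module.End F A) :=
  Submodule.span F {d | ∃ x y : A, ⁅L x, L y⁆ = d}

theorem lie_mul_mul_mem_innerDerivations (x y : A) : ⁅L x, L y⁆ ∈ innerDerivations F A :=
  Submodule.subset_span ⟨x, y, rfl⟩

variable [IsCommJordan A]

theorem commute_mul_mul_self (x : A) : Commute (L x) (L (x * x)) := by
  ext y
  exact (IsJordan.lmul_lmul_comm_lmul x y).symm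

theorem commute_mul_two_mul_sq_sub (x : A) : Commute (L x) (2 * (L x * L x) - L (x * x)) :=
  ((Commute.ofNat_right (L x) 2).mul_right ((Commute.refl _).mul_right (Commute.refl _))).sub_right
    (commute_mul_mul_self x)

section InnerStructureAlgebra

variable [NeZero (2 : F)]

theorem lie_mul_mul_add_lie_mul_mul_add_lie_mul_mul_eq_zero (a b c : A) :
    ⁅L a, L (b * c)⁆ + ⁅L b, L (c * a)⁆ + ⁅L c, L (a * b)⁆ = 0 := by
  have htwo : (2 : F) • (⁅L a, L (b * c)⁆ + ⁅L b, L (c * a)⁆ + ⁅L c, L (a * b)⁆) = 0 := by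
    ext d
    rw [two_smul, ← two_nsmul]
    exact DFunLike.congr_fun (two_nsmul_lie_lmul_lmul_add_add_eq_zero a b c) d
  exact (smul_eq_zero.1 htwo).resolve_left two_ne_zero

theorem mul_mul_mul (a b d : A) :
    L (a * b * d) = L (a * d) * L b + L (b * d) * L a + L (a * b) * L d -
      L a * L d * L b - L b * L d * L a := by
  ext c
  have h := LinearMap.congr_fun
    (lie_mul_mul_add_lie_mul_mul_add_lie_mul_mul_eq_zero (F := F) a b c) d
  simp only [LieRing.of_associative_ring_bracket, LinearMap.mul_apply', LinearMap.sub_apply,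
    LinearMap.add_apply, Module.End.mul_apply, LinearMap.zero_apply] at h ⊢
  rw [mul_comm (b * c) d, mul_comm c a, mul_comm (a * c) d, mul_comm c (a * b * d),
    mul_comm (b * c) (a * d), mul_comm (a * c) (b * d), mul_comm c d] at h
  rw [← sub_eq_zero, ← h]
  abel

theorem mul_mul_self_mul {x y : A} (h : Commute (L x) (L y)) (h' : Commute (L x) (L (x * y))) :
    L (x * (x * y)) = 2 * L x * L (x * y) - (2 * (L x * L x) - L (x * x)) * L y := by
  rw [mul_comm x (x * y), mul_mul_mul, mul_comm y x, mul_assoc 2, h'.eq, sub_mul, mul_assoc 2,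
    two_mul, two_mul, mul_assoc (L y), ← (h.mul_left h).eq]
  abel

theorem commute_mul_mul_pow (x : A) (n : ℕ) : Commute (L x) (L ((L x ^ n) x)) := by
  induction n using Nat.twoStepInduction with
  | zero => exact Commute.refl _
  | one => exact commute_mul_mul_self x
  | more n ih ih' =>
    rw [pow_succ', Module.End.mul_apply] at ih'
    rw [pow_succ', pow_succ', Module.End.mul_apply, Module.End.mul_apply]
    rw [LinearMap.mul_apply', LinearMap.mul_apply', mul_mul_self_mul ih ih']
    exact (((Commute.ofNat_right (L x) 2).mul_right (Commute.refl _)).mul_right ih').sub_right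
      ((commute_mul_two_mul_sq_sub x).mul_right ih)

theorem mul_pow_recurrence (x : A) (n : ℕ) :
    L ((L x ^ (n + 2)) x) =
      2 * L x * L ((L x ^ (n + 1)) x) - (2 * (L x * L x) - L (x * x)) * L ((L x ^ n) x) := by
  have h := commute_mul_mul_pow (F := F) x n
  have h' := commute_mul_mul_pow (F := F) x (n + 1)
  rw [pow_succ', Module.End.mul_apply] at h'
  rw [pow_succ', pow_succ', Module.End.mul_apply, Module.End.mul_apply]
  exact mul_mul_self_mul h h'

theorem lie_lie_mul_mul_mul (x y z : A) : ⁅⁅L x, L y⁆, L z⁆ = L (⁅L x, L y⁆ z) := by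
  have h : ⁅L x, L y⁆ z = z * y * x - z * x * y := by
    simp [LieRing.of_associative_ring_bracket, mul_comm]
  rw [h, map_sub, mul_mul_mul, mul_mul_mul, mul_comm y x]
  simp only [LieRing.of_associative_ring_bracket]
  noncomm_ring

theorem lie_mul_of_mem_innerDerivations {d : Module.End F A} (hd : d ∈ innerDerivations F A)
    (z : A) : ⁅d, L z⁆ = L (d z) := by
  induction hd using Submodule.span_induction with
  | mem d hd =>
    obtain ⟨x, y, rfl⟩ := hd
    exact lie_lie_mul_mul_mul x y z
  | zero => simp
  | add d e _ _ hd he => rw [add_lie, LinearMap.add_apply, map_add, hd, he]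
  | smul c d _ hd => rw [smul_lie, LinearMap.smul_apply, map_smul, hd]

theorem lie_mem_innerDerivations {d e : Module.End F A} (hd : d ∈ innerDerivations F A)
    (he : e ∈ innerDerivations F A) : ⁅d, e⁆ ∈ innerDerivations F A := by
  induction he using Submodule.span_induction with
  | mem e he =>
    obtain ⟨x, y, rfl⟩ := he
    rw [leibniz_lie, lie_mul_of_mem_innerDerivations hd, lie_mul_of_mem_innerDerivations hd]
    exact add_mem (lie_mul_mul_mem_innerDerivations _ _) (lie_mul_mul_mem_innerDerivations _ _)
  | zero => simp
  | add e f _ _ he hf => rw [lie_add]; exact add_mem he hf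
  | smul c e _ he => rw [lie_smul]; exact Submodule.smul_mem _ c he

theorem trace_mul_eq_zero_of_mem_innerDerivations (hnil : ∀ x : A, IsNilpotent (L x))
    {d e : Module.End F A} (hd : d ∈ innerDerivations F A) (he : e ∈ innerDerivations F A) :
    LinearMap.trace F A (d * e) = 0 := by
  induction hd using Submodule.span_induction with
  | mem d hd =>
    obtain ⟨x, y, rfl⟩ := hd
    rw [LinearMap.trace_lie_mul_eq, ← lie_skew, lie_mul_of_mem_innerDerivations he, mul_neg,
      map_neg, trace_mul_mul_eq_zero_of_isNilpotent hnil, neg_zero]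
  | zero => simp
  | add d f _ _ hd hf => rw [add_mul, map_add, hd, hf, add_zero]
  | smul c d _ hd => rw [smul_mul_assoc, map_smul, hd, smul_zero]

theorem lie_prodMap_add_sub {d e : Module.End F A} (hd : d ∈ innerDerivations F A)
    (he : e ∈ innerDerivations F A) (x y : A) :
    ⁅((d + L x).prodMap (d - L x) : Module.End F (A × A)), (e + L y).prodMap (e - L y)⁆ =
      (⁅d, e⁆ + ⁅L x, L y⁆ + L (d y - e x)).prodMap (⁅d, e⁆ + ⁅L x, L y⁆ - L (d y - e x)) := by
  rw [map_sub, ← lie_mul_of_mem_innerDerivations hd, ← lie_mul_of_mem_innerDerivations he]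
  ext p <;> simp [LieRing.of_associative_ring_bracket, mul_add, mul_sub] <;> abel

variable (F A) in
/-- The Lie algebra `L(A) ⊕ Inn A` of the Tits-Kantor-Koecher construction in its action on `A ⊕ A`,
where `L x + d` acts through `d + L x` on the first summand and through `d - L x` on the second. -/
def innerStructureAlgebra : LieSubalgebra F (Module.End F (A × A)) where
  carrier := {f | ∃ x : A, ∃ d ∈ innerDerivations F A, (d + L x).prodMap (d - L x) = f}
  add_mem' := by
    rintro _ _ ⟨x, d, hd, rfl⟩ ⟨y, e, he, rfl⟩
    refine ⟨x + y, d + e, add_mem hd he, ?_⟩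
    rw [← LinearMap.prodMap_add, map_add, add_add_add_comm, add_sub_add_comm]
  zero_mem' := ⟨0, 0, zero_mem _, by simp⟩
  smul_mem' := by
    rintro c _ ⟨x, d, hd, rfl⟩
    refine ⟨c • x, c • d, Submodule.smul_mem _ c hd, ?_⟩
    rw [← LinearMap.prodMap_smul, map_smul, smul_add, smul_sub]
  lie_mem' := by
    rintro _ _ ⟨x, d, hd, rfl⟩ ⟨y, e, he, rfl⟩
    exact ⟨d y - e x, ⁅d, e⁆ + ⁅L x, L y⁆,
      add_mem (lie_mem_innerDerivations hd he) (lie_mul_mul_mem_innerDerivations x y),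
      (lie_prodMap_add_sub hd he x y).symm⟩

theorem prodMap_mul_neg_mem_innerStructureAlgebra (x : A) :
    (L x).prodMap (-L x) ∈ innerStructureAlgebra F A :=
  ⟨x, 0, zero_mem _, by rw [zero_add, zero_sub]⟩

theorem prodMap_self_mem_innerStructureAlgebra {d : Module.End F A}
    (hd : d ∈ innerDerivations F A) : d.prodMap d ∈ innerStructureAlgebra F A :=
  ⟨0, d, hd, by rw [map_zero, add_zero, sub_zero]⟩

theorem prodMap_self_mem_derivedSeries {d : Module.End F A} (hd : d ∈ innerDerivations F A) :
    (⟨d.prodMap d, prodMap_self_mem_innerStructureAlgebra hd⟩ : innerStructureAlgebra F A) ∈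
      derivedSeries F (innerStructureAlgebra F A) 1 := by
  induction hd using Submodule.span_induction with
  | mem d hd =>
    obtain ⟨x, y, rfl⟩ := hd
    have hlie : (⟨_, prodMap_self_mem_innerStructureAlgebra
          (lie_mul_mul_mem_innerDerivations x y)⟩ : innerStructureAlgebra F A) =
        ⁅(⟨_, prodMap_mul_neg_mem_innerStructureAlgebra x⟩ : innerStructureAlgebra F A),
          (⟨_, prodMap_mul_neg_mem_innerStructureAlgebra y⟩ : innerStructureAlgebra F A)⁆ := by
      ext p <;> simp [LieRing.of_associative_ring_bracket]
    rw [hlie, derivedSeries_def, derivedSeriesOfIdeal_succ]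
    exact LieSubmodule.lie_mem_lie (LieSubmodule.mem_top _) (LieSubmodule.mem_top _)
  | zero => exact zero_mem (derivedSeries F (innerStructureAlgebra F A) 1)
  | add d e _ _ hd he => exact add_mem hd he
  | smul c d _ hd => exact (derivedSeries F (innerStructureAlgebra F A) 1).smul_mem c hd

theorem traceForm_innerStructureAlgebra_eq_zero [FiniteDimensional F A]
    (hnil : ∀ x : A, IsNilpotent (L x)) :
    traceForm F (innerStructureAlgebra F A) (A × A) = 0 := by
  ext ⟨_, x, d, hd, rfl⟩ ⟨_, y, e, he, rfl⟩
  calc LinearMap.trace F (A × A)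
        ((d + L x).prodMap (d - L x) * (e + L y).prodMap (e - L y) : Module.End F (A × A))
      = LinearMap.trace F A ((d + L x) * (e + L y)) +
          LinearMap.trace F A ((d - L x) * (e - L y)) := by
        rw [LinearMap.prodMap_mul, LinearMap.trace_prodMap']
    _ = 2 * LinearMap.trace F A (d * e) + 2 * LinearMap.trace F A (L x * L y) := by
        simp only [add_mul, mul_add, sub_mul, mul_sub, map_add, map_sub]
        ring
    _ = 0 := by
        rw [trace_mul_eq_zero_of_mem_innerDerivations hnil hd he,
          trace_mul_mul_eq_zero_of_isNilpotent hnil, mul_zero, add_zero]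

end InnerStructureAlgebra

section CharZero

variable [CharZero F] [FiniteDimensional F A]

theorem isNilpotent_mul_of_trace_eq_zero (htr : ∀ x : A, LinearMap.trace F A (L x) = 0) (x : A) :
    IsNilpotent (L x) := by
  have hsmul (f : Module.End F A) : 2 * f = (2 : F) • f := by rw [two_mul, two_smul]
  have h : IsNilpotent ((2 : F) • L x) := by
    refine isNilpotent_of_trace_powerSum_eq_zero (q := 2 * (L x * L x) - L (x * x))
      (s := fun n => (2 : F) • L ((L x ^ n) x))
      ((commute_mul_two_mul_sq_sub x).smul_left 2) rfl ?_ (fun n => ?_) fun n => ?_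
    · simp only [pow_one, LinearMap.mul_apply', smul_mul_assoc, mul_smul_comm, hsmul, smul_sub]
      abel
    · simp only [mul_pow_recurrence, hsmul, smul_sub, smul_mul_assoc, mul_smul_comm]
    · rw [map_smul, htr, smul_zero]
  simpa using h.smul (2⁻¹ : F)

theorem isNilpotent_innerStructureAlgebra (hnil : ∀ x : A, IsNilpotent (L x)) :
    LieModule.IsNilpotent (innerStructureAlgebra F A) (A × A) := by
  refine isNilpotent_of_traceForm_eq_zero (traceForm_innerStructureAlgebra_eq_zero hnil) ?_
  rintro ⟨_, x, d, hd, rfl⟩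
  refine ⟨_, prodMap_self_mem_derivedSeries hd, ?_⟩
  have hsub : (d + L x).prodMap (d - L x) - d.prodMap d = (L x).prodMap (-L x) := by
    ext p <;> simp
  change IsNilpotent ((d + L x).prodMap (d - L x) - d.prodMap d : Module.End F (A × A))
  rw [hsub]
  exact isNilpotent_prodMap_iff.2 ⟨hnil x, (hnil x).neg⟩

theorem exists_chain_of_isNilpotent_mul (hnil : ∀ x : A, IsNilpotent (L x)) :
    ∃ N : ℕ → Submodule F A, N 0 = ⊤ ∧ (∀ i, ∀ x : A, ∀ y ∈ N i, x * y ∈ N (i + 1)) ∧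
      ∃ k, N k = ⊥ := by
  obtain ⟨k, hk⟩ := (LieModule.isNilpotent_iff F _ _).1 (isNilpotent_innerStructureAlgebra hnil)
  let W := lowerCentralSeries F (innerStructureAlgebra F A) (A × A)
  refine ⟨fun i => (W i).toSubmodule.comap (LinearMap.inl F A A), by simp [W],
    fun i x y hy => ?_, k, ?_⟩
  · have hlie : ⁅(⟨_, prodMap_mul_neg_mem_innerStructureAlgebra x⟩ : innerStructureAlgebra F A),
        ((y, 0) : A × A)⁆ ∈ W (i + 1) := by
      simp only [W, lowerCentralSeries_succ]
      exact LieSubmodule.lie_mem_lie (LieSubmodule.mem_top _) hy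
    have hprod : ((L x).prodMap (-L x) : Module.End F (A × A)) (y, 0) ∈ W (i + 1) := hlie
    simpa using hprod
  · have hW : W k = ⊥ := hk
    simp only [hW, LieSubmodule.bot_toSubmodule, Submodule.comap_bot]
    exact LinearMap.ker_eq_bot.2 LinearMap.inl_injective

end CharZero

end JordanAlgebra

/-- A product of at least `2 ^ i` factors, however bracketed, has a factor which is itself a product
of at least `2 ^ (i - 1)` factors. -/
theorem nser_le_of_mul_mem {F A : Type*} [Field F] [NonUnitalNonAssocCommRing A] [Module F A]
    {N : ℕ → Submodule F A} (h0 : N 0 = ⊤)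
    (hN : ∀ i, ∀ x : A, ∀ y ∈ N i, x * y ∈ N (i + 1)) {i n : ℕ} (hn : 2 ^ i ≤ n + 1) :
    nser F A n ≤ N i := by
  induction i generalizing n with
  | zero => simp [h0]
  | succ i ih =>
    rw [pow_succ] at hn
    obtain _ | n := n
    · have := Nat.one_le_two_pow (n := i)
      omega
    rw [nser]
    refine iSup_le fun p => Submodule.span_le.2 ?_
    rintro _ ⟨x, hx, y, hy, rfl⟩
    have hp := p.isLt
    by_cases hx' : 2 ^ i ≤ p.1 + 1
    · rw [mul_comm]
      exact hN i y x (ih hx' hx)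
    · exact hN i x y (ih (by omega) hy)

/-- a Jordan algebra admitting a bijective derivation is nilpotent. -/
theorem nilpotent_of_bijective_derivation
    {K : Type*} [Field K] [CharZero K]
    {J : Type*} [NonUnitalNonAssocCommRing J] [Module K J]
    [SMulCommClass K J J] [IsScalarTower K J J] [FiniteDimensional K J]
    (hjordan : ∀ x y : J, (x * y) * (x * x) = x * (y * (x * x)))
    (D : J →ₗ[K] J) (hbij : Function.Bijective D)
    (hder : ∀ x y : J, D (x * y) = D x * y + x * D y) :
    ∃ n : ℕ, nser K J n = ⊥ := by
  have : IsCommJordan J := ⟨hjordan⟩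
  have htrace : ∀ x : J, LinearMap.trace K J (LinearMap.mul K J x) = 0 :=
    trace_mul_eq_zero_of_surjective_derivation D hbij.surjective hder
  have hnil : ∀ x : J, IsNilpotent (LinearMap.mul K J x) :=
    JordanAlgebra.isNilpotent_mul_of_trace_eq_zero htrace
  obtain ⟨N, h0, hN, k, hk⟩ := JordanAlgebra.exists_chain_of_isNilpotent_mul hnil
  exact ⟨2 ^ k, le_bot_iff.1 (hk ▸ nser_le_of_mul_mem h0 hN (Nat.le_succ _))⟩
end

section
/- Let (J, B) be a pseudo-euclidean Jordan algebra over a field K of characteristic zero. Then J admits a symplectic form ω if and only if there exists a bijective B-antisymmetric derivation D of J; more precisely, for every symplectic form ω on J there is a bijective B-antisymmetric derivation D with ω(x, y) = B(D(x), y) for all x, y ∈ J, and conversely for every bijective B-antisymmetric derivation D of J the bilinear form (x, y) ↦ B(D(x), y) is a symplectic form on J. -/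
variable {K : Type*} [Field K] [CharZero K]
variable {J : Type*} [NonUnitalNonAssocCommRing J] [Module K J]
  [SMulCommClass K J J] [IsScalarTower K J J] [FiniteDimensional K J]

/-- A symplectic form on a Jordan algebra: a nondegenerate skew-symmetric bilinear form
satisfying `ω(xy, z) + ω(yz, x) + ω(zx, y) = 0`. -/
def IsSymplecticForm (ω : J →ₗ[K] J →ₗ[K] K) : Prop :=
  (∀ x y : J, ω x y = -ω y x) ∧
  (∀ x : J, (∀ y : J, ω x y = 0) → x = 0) ∧
  (∀ x y z : J, ω (x * y) z + ω (y * z) x + ω (z * x) y = 0)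

/-!
On a finite-dimensional space the nondegenerate form `B` represents every bilinear form as
`ω(x, y) = B(D(x), y)` for a unique endomorphism `D`, so each axiom on `ω` is a condition on `D`:
skew-symmetry of `ω` is antisymmetry of `D`, because `B` is symmetric, and nondegeneracy of `ω` is
injectivity of `D`. When `B` is associative and `D` antisymmetric, the cyclic sum
`ω(xy, z) + ω(yz, x) + ω(zx, y)` equals `B(D(xy) - D(x)y - xD(y), z)`, which vanishes identically
exactly when `D` is a derivation.
-/

section LinearAlgebra

variable {R M N P Q : Type*} [CommRing R] [AddCommGroup M] [Module R M] [AddCommGroup N]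
  [Module R N] [AddCommGroup P] [Module R P] [AddCommGroup Q] [Module R Q]

theorem separatingLeft_comp_iff_injective {B : N →ₗ[R] P →ₗ[R] Q} (hB : B.SeparatingLeft)
    (D : M →ₗ[R] N) : (B ∘ₗ D).SeparatingLeft ↔ Function.Injective D := by
  rw [LinearMap.separatingLeft_iff_ker_eq_bot] at hB ⊢
  rw [LinearMap.ker_comp_of_ker_eq_bot D hB, LinearMap.ker_eq_bot]

theorem skew_comp_iff_antisymmetric {B : M →ₗ[R] M →ₗ[R] Q} (hsymm : ∀ x y, B x y = B y x)
    (D : M →ₗ[R] M) :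
    (∀ x y, (B ∘ₗ D) x y = -(B ∘ₗ D) y x) ↔ ∀ x y, B (D x) y = -B x (D y) :=
  forall₂_congr fun x y => by
    rw [LinearMap.comp_apply, LinearMap.comp_apply, hsymm (D y) x]

theorem exists_comp_eq_of_separatingLeft {F V W : Type*} [Field F] [AddCommGroup V] [Module F V]
    [FiniteDimensional F V] [AddCommGroup W] [Module F W] {B : V →ₗ[F] V →ₗ[F] F}
    (hB : B.SeparatingLeft) (ω : W →ₗ[F] V →ₗ[F] F) : ∃ D : W →ₗ[F] V, B ∘ₗ D = ω := by
  have hinj : Function.Injective B :=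
    LinearMap.ker_eq_bot.1 (LinearMap.separatingLeft_iff_ker_eq_bot.1 hB)
  have hsurj : Function.Surjective B :=
    (LinearMap.injective_iff_surjective_of_finrank_eq_finrank
      (Subspace.dual_finrank_eq (K := F)).symm).1 hinj
  exact Module.projective_lifting_property B ω hsurj

end LinearAlgebra

section AssociativeForm

variable {R A M : Type*} [CommRing R] [NonUnitalNonAssocCommRing A] [Module R A]
  [AddCommGroup M] [Module R M] {B : A →ₗ[R] A →ₗ[R] M} {D : A →ₗ[R] A}

theorem cyclic_sum_comp_eq (hsymm : ∀ x y, B x y = B y x)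
    (hassoc : ∀ x y z, B (x * y) z = B x (y * z)) (hanti : ∀ x y, B (D x) y = -B x (D y))
    (x y z : A) :
    (B ∘ₗ D) (x * y) z + (B ∘ₗ D) (y * z) x + (B ∘ₗ D) (z * x) y =
      B (D (x * y) - (D x * y + x * D y)) z := by
  have hyz : B (D (y * z)) x = -B (D x * y) z := by rw [hanti, hsymm, hassoc]
  have hzx : B (D (z * x)) y = -B (x * D y) z := by rw [hanti, hassoc, hsymm]
  simp only [LinearMap.comp_apply, hyz, hzx, map_sub, map_add, LinearMap.sub_apply,
    LinearMap.add_apply]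
  abel

theorem cyclic_sum_comp_eq_zero_iff_derivation (hsymm : ∀ x y, B x y = B y x)
    (hB : B.SeparatingLeft) (hassoc : ∀ x y z, B (x * y) z = B x (y * z))
    (hanti : ∀ x y, B (D x) y = -B x (D y)) :
    (∀ x y z, (B ∘ₗ D) (x * y) z + (B ∘ₗ D) (y * z) x + (B ∘ₗ D) (z * x) y = 0) ↔
      ∀ x y, D (x * y) = D x * y + x * D y := by
  simp only [cyclic_sum_comp_eq hsymm hassoc hanti]
  refine forall₂_congr fun x y => ⟨fun h => sub_eq_zero.1 (hB _ h), fun h z => ?_⟩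
  rw [h, sub_self, map_zero, LinearMap.zero_apply]

end AssociativeForm

section SymplecticForm

variable {F A : Type*} [Field F] [NonUnitalNonAssocCommRing A] [Module F A]

theorem isSymplecticForm_comp_iff {B : A →ₗ[F] A →ₗ[F] F} (hsymm : ∀ x y, B x y = B y x)
    (hB : B.SeparatingLeft) (hassoc : ∀ x y z, B (x * y) z = B x (y * z)) (D : A →ₗ[F] A) :
    IsSymplecticForm (B ∘ₗ D) ↔ Function.Injective D ∧
      (∀ x y, D (x * y) = D x * y + x * D y) ∧ (∀ x y, B (D x) y = -B x (D y)) := by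
  have hskew := skew_comp_iff_antisymmetric hsymm D
  have hinj := separatingLeft_comp_iff_injective hB D
  constructor
  · rintro ⟨hω, hsep, hcyc⟩
    have hanti := hskew.1 hω
    exact ⟨hinj.1 hsep,
      (cyclic_sum_comp_eq_zero_iff_derivation hsymm hB hassoc hanti).1 hcyc, hanti⟩
  · rintro ⟨hD, hder, hanti⟩
    exact ⟨hskew.2 hanti, hinj.2 hD,
      (cyclic_sum_comp_eq_zero_iff_derivation hsymm hB hassoc hanti).2 hder⟩

theorem symplectic_iff_invertible_antisymmetric_derivation_general [FiniteDimensional F A]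
    (B : A →ₗ[F] A →ₗ[F] F)
    (hsymm : ∀ x y : A, B x y = B y x)
    (hnondeg : ∀ x : A, (∀ y : A, B x y = 0) → x = 0)
    (hassoc : ∀ x y z : A, B (x * y) z = B x (y * z)) :
    ((∃ ω : A →ₗ[F] A →ₗ[F] F, IsSymplecticForm ω) ↔
      (∃ D : A →ₗ[F] A, Function.Bijective D ∧
        (∀ x y : A, D (x * y) = D x * y + x * D y) ∧
        (∀ x y : A, B (D x) y = -B x (D y)))) ∧
    (∀ ω : A →ₗ[F] A →ₗ[F] F, IsSymplecticForm ω →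
      ∃ D : A →ₗ[F] A, Function.Bijective D ∧
        (∀ x y : A, D (x * y) = D x * y + x * D y) ∧
        (∀ x y : A, B (D x) y = -B x (D y)) ∧
        (∀ x y : A, ω x y = B (D x) y)) ∧
    (∀ D : A →ₗ[F] A, Function.Bijective D →
      (∀ x y : A, D (x * y) = D x * y + x * D y) →
      (∀ x y : A, B (D x) y = -B x (D y)) →
      IsSymplecticForm (B ∘ₗ D)) := by
  have symplectic_iff := isSymplecticForm_comp_iff hsymm hnondeg hassoc
  have exists_derivation : ∀ ω : A →ₗ[F] A →ₗ[F] F, IsSymplecticForm ω →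
      ∃ D : A →ₗ[F] A, Function.Bijective D ∧ (∀ x y, D (x * y) = D x * y + x * D y) ∧
        (∀ x y, B (D x) y = -B x (D y)) ∧ ∀ x y, ω x y = B (D x) y := by
    intro ω hω
    obtain ⟨D, rfl⟩ := exists_comp_eq_of_separatingLeft hnondeg ω
    obtain ⟨hinj, hder, hanti⟩ := (symplectic_iff D).1 hω
    exact ⟨D, ⟨hinj, LinearMap.injective_iff_surjective.1 hinj⟩, hder, hanti, fun _ _ => rfl⟩
  refine ⟨⟨?_, ?_⟩, exists_derivation, fun D hbij hder hanti =>
    (symplectic_iff D).2 ⟨hbij.injective, hder, hanti⟩⟩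
  · rintro ⟨ω, hω⟩
    obtain ⟨D, hbij, hder, hanti, -⟩ := exists_derivation ω hω
    exact ⟨D, hbij, hder, hanti⟩
  · rintro ⟨D, hbij, hder, hanti⟩
    exact ⟨B ∘ₗ D, (symplectic_iff D).2 ⟨hbij.injective, hder, hanti⟩⟩

end SymplecticForm

/-- a pseudo-euclidean Jordan algebra `(J, B)` admits a symplectic form iff it
has a bijective `B`-antisymmetric derivation; more precisely, every symplectic form `ω`
arises as `ω(x, y) = B(D x, y)` for such a `D`, and conversely every such `D` yields a
symplectic form. -/
theorem symplectic_iff_invertible_antisymmetric_derivation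
    (hjordan : ∀ x y : J, (x * y) * (x * x) = x * (y * (x * x)))
    (B : J →ₗ[K] J →ₗ[K] K)
    (hsymm : ∀ x y : J, B x y = B y x)
    (hnondeg : ∀ x : J, (∀ y : J, B x y = 0) → x = 0)
    (hassoc : ∀ x y z : J, B (x * y) z = B x (y * z)) :
    -- the equivalence
    ((∃ ω : J →ₗ[K] J →ₗ[K] K, IsSymplecticForm ω) ↔
      (∃ D : J →ₗ[K] J, Function.Bijective D ∧
        (∀ x y : J, D (x * y) = D x * y + x * D y) ∧
        (∀ x y : J, B (D x) y = -B x (D y)))) ∧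
    -- every symplectic form comes from such a derivation
    (∀ ω : J →ₗ[K] J →ₗ[K] K, IsSymplecticForm ω →
      ∃ D : J →ₗ[K] J, Function.Bijective D ∧
        (∀ x y : J, D (x * y) = D x * y + x * D y) ∧
        (∀ x y : J, B (D x) y = -B x (D y)) ∧
        (∀ x y : J, ω x y = B (D x) y)) ∧
    -- every such derivation gives a symplectic form
    (∀ D : J →ₗ[K] J, Function.Bijective D →
      (∀ x y : J, D (x * y) = D x * y + x * D y) →
      (∀ x y : J, B (D x) y = -B x (D y)) →
      IsSymplecticForm (B ∘ₗ D)) :=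
  symplectic_iff_invertible_antisymmetric_derivation_general B hsymm hnondeg hassoc
end

section
/- Let (J, B, ω) be a symplectic pseudo-euclidean Jordan algebra over the field ℂ. Then there exist two subalgebras U and V of J such that J = U ⊕ V as vector spaces, B(U, U) = B(V, V) = {0}, and ω(U, U) = ω(V, V) = {0} (i.e., (J = U ⊕ V, B, ω) is a symplectic Jordan-Manin algebra). -/
/-!
Since `B` is nondegenerate, `ω x y = B (D x) y` for a unique endomorphism `D`. The cyclic identity
for `ω` says that `D` is a derivation, skew-symmetry says that `D` is skew-adjoint for `B` (hence
also for `ω`), and nondegeneracy of `ω` says that `D` is invertible. The generalized eigenspaces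
`J_a` of `D` therefore satisfy `J_a * J_b ⊆ J_(a + b)`, while `B` and `ω` vanish on `J_a × J_b`
unless `a + b = 0`. As no eigenvalue is zero, some additive map `φ` to `ℚ` is nonzero on all of
them, and `U`, `V` are the sums of the `J_a` with `φ a > 0`, respectively `φ a < 0`.
-/

open Module Module.End
open scoped Pointwise

section SpectralSubspace

variable {R M : Type*} [CommRing R] [AddCommGroup M] [Module R M]

/-- The spectral subspace of `D` for a set `S` of scalars: the sum of the generalized eigenspaces
of `D` for the eigenvalues in `S`. Elements of `S` that are not eigenvalues contribute nothing. -/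
def spectralSubspace (D : End R M) (S : Set R) : Submodule R M :=
  ⨆ a ∈ S, D.maxGenEigenspace a

theorem maxGenEigenspace_le_spectralSubspace (D : End R M) {S : Set R} {a : R} (ha : a ∈ S) :
    D.maxGenEigenspace a ≤ spectralSubspace D S :=
  le_iSup₂ (f := fun b (_ : b ∈ S) => D.maxGenEigenspace b) a ha

theorem spectralSubspace_mono (D : End R M) {S T : Set R} (hST : S ⊆ T) :
    spectralSubspace D S ≤ spectralSubspace D T :=
  biSup_mono fun _ ha => hST ha

theorem maxGenEigenspace_eq_bot {D : End R M} {a : R} (ha : ¬ D.HasEigenvalue a) :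
    D.maxGenEigenspace a = ⊥ := by
  by_contra h
  exact ha ((hasUnifEigenvalue_iff_hasUnifEigenvalue_one ENat.top_pos).mp h)

theorem spectralSubspace_eq_bot {D : End R M} {S : Set R} (hS : ∀ a ∈ S, ¬ D.HasEigenvalue a) :
    spectralSubspace D S = ⊥ :=
  iSup₂_eq_bot.mpr fun a ha => maxGenEigenspace_eq_bot (hS a ha)

theorem ne_zero_of_hasEigenvalue_of_injective {D : End R M} (hD : Function.Injective D) {a : R}
    (ha : D.HasEigenvalue a) : a ≠ 0 := by
  rintro rfl
  obtain ⟨v, hv⟩ := ha.exists_hasEigenvector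
  exact hv.2 (hD (by rw [hv.apply_eq_smul, zero_smul, map_zero]))

variable [IsDomain R] [IsTorsionFree R M]

theorem eq_zero_of_hasEigenvalue_zero {a : R} (ha : (0 : End R M).HasEigenvalue a) : a = 0 := by
  obtain ⟨v, hv⟩ := ha.exists_hasEigenvector
  exact (smul_eq_zero.mp hv.apply_eq_smul.symm).resolve_right hv.2

theorem isCompl_spectralSubspace {D : End R M} (hD : ⨆ a, D.maxGenEigenspace a = ⊤) {S T : Set R}
    (hdisj : Disjoint S T) (hcover : ∀ a, D.HasEigenvalue a → a ∈ S ∪ T) :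
    IsCompl (spectralSubspace D S) (spectralSubspace D T) := by
  refine ⟨D.independent_maxGenEigenspace.disjoint_biSup_biSup hdisj, ?_⟩
  rw [codisjoint_iff_le_sup, ← hD, iSup_le_iff]
  intro a
  by_cases ha : D.HasEigenvalue a
  · rcases hcover a ha with hS | hT
    · exact (maxGenEigenspace_le_spectralSubspace D hS).trans le_sup_left
    · exact (maxGenEigenspace_le_spectralSubspace D hT).trans le_sup_right
  · exact (maxGenEigenspace_eq_bot ha).trans_le bot_le

end SpectralSubspace

section Leibniz

variable {R M N P : Type*} [CommRing R] [AddCommGroup M] [Module R M] [AddCommGroup N] [Module R N]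
  [AddCommGroup P] [Module R P]

/-- The Leibniz rule `F (f x y) = f (D x) y + f x (E y)` for a bilinear map `f`. A derivation of an
algebra is the case where `f` is the product and `D = E = F`; an endomorphism that is skew-adjoint
for a bilinear form `f` is the case `D = E`, `F = 0`. -/
def IsLeibniz (f : M →ₗ[R] N →ₗ[R] P) (D : End R M) (E : End R N) (F : End R P) : Prop :=
  ∀ x y, F (f x y) = f (D x) y + f x (E y)

namespace IsLeibniz

variable {f : M →ₗ[R] N →ₗ[R] P} {D : End R M} {E : End R N} {F : End R P}

theorem sub_smul_one (h : IsLeibniz f D E F) (a b : R) :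
    IsLeibniz f (D - a • 1) (E - b • 1) (F - (a + b) • 1) := by
  intro x y
  simp only [LinearMap.sub_apply, LinearMap.smul_apply, End.one_apply, h x y, map_sub, map_smul,
    add_smul, LinearMap.add_apply]
  abel

theorem pow_add_apply_eq_zero (h : IsLeibniz f D E F) {m n : ℕ} {x : M} {y : N}
    (hx : (D ^ m) x = 0) (hy : (E ^ n) y = 0) : (F ^ (m + n)) (f x y) = 0 := by
  induction hk : m + n generalizing m n x y with
  | zero =>
    obtain rfl : m = 0 := by lia
    simp_all
  | succ k ih =>
    rcases m with _ | m
    · simp_all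
    rcases n with _ | n
    · simp_all
    rw [pow_succ, End.mul_apply, h, map_add,
      ih (m := m) (n := n + 1) (by rwa [pow_succ, End.mul_apply] at hx) hy (by lia),
      ih (m := m + 1) (n := n) hx (by rwa [pow_succ, End.mul_apply] at hy) (by lia), add_zero]

theorem apply_mem_maxGenEigenspace_add (h : IsLeibniz f D E F) {a b : R} {x : M} {y : N}
    (hx : x ∈ D.maxGenEigenspace a) (hy : y ∈ E.maxGenEigenspace b) :
    f x y ∈ F.maxGenEigenspace (a + b) := by
  rw [mem_maxGenEigenspace] at hx hy ⊢
  obtain ⟨m, hm⟩ := hx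
  obtain ⟨n, hn⟩ := hy
  exact ⟨m + n, (h.sub_smul_one a b).pow_add_apply_eq_zero hm hn⟩

theorem apply_mem_spectralSubspace_add (h : IsLeibniz f D E F) {S T : Set R} {x : M} {y : N}
    (hx : x ∈ spectralSubspace D S) (hy : y ∈ spectralSubspace E T) :
    f x y ∈ spectralSubspace F (S + T) := by
  suffices hle : Submodule.map₂ f (spectralSubspace D S) (spectralSubspace E T) ≤
      spectralSubspace F (S + T) from hle (Submodule.apply_mem_map₂ f hx hy)
  simp only [spectralSubspace.eq_def D, spectralSubspace.eq_def E, Submodule.map₂_iSup_left,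
    Submodule.map₂_iSup_right, iSup_le_iff, Submodule.map₂_le]
  intro b hb a ha u hu v hv
  exact maxGenEigenspace_le_spectralSubspace F (Set.add_mem_add ha hb)
    (h.apply_mem_maxGenEigenspace_add hu hv)

theorem apply_mem_spectralSubspace {f : M →ₗ[R] M →ₗ[R] M} {D : End R M} (h : IsLeibniz f D D D)
    (S : AddSubsemigroup R) {x y : M} (hx : x ∈ spectralSubspace D S)
    (hy : y ∈ spectralSubspace D S) : f x y ∈ spectralSubspace D S :=
  spectralSubspace_mono D (Set.add_subset_iff.mpr fun _ ha _ hb => S.add_mem ha hb)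
    (h.apply_mem_spectralSubspace_add hx hy)

theorem apply_eq_zero_of_mem_spectralSubspace [IsDomain R] [IsTorsionFree R P]
    {f : M →ₗ[R] M →ₗ[R] P} {D : End R M} (h : IsLeibniz f D D 0) {S : AddSubsemigroup R}
    (hS : 0 ∉ S) {x y : M} (hx : x ∈ spectralSubspace D S) (hy : y ∈ spectralSubspace D S) :
    f x y = 0 := by
  have hbot : spectralSubspace (0 : End R P) (S + S : Set R) = ⊥ := by
    refine spectralSubspace_eq_bot fun c hc hev => ?_
    obtain ⟨a, ha, b, hb, rfl⟩ := hc
    exact hS (eq_zero_of_hasEigenvalue_zero hev ▸ S.add_mem ha hb)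
  simpa only [hbot, Submodule.mem_bot] using h.apply_mem_spectralSubspace_add hx hy

end IsLeibniz

end Leibniz

section RepresentsForm

/-- The endomorphism `D` represents the bilinear form `ω` with respect to the bilinear form `B`. -/
def RepresentsForm {R M : Type*} [CommRing R] [AddCommGroup M] [Module R M]
    (B ω : M →ₗ[R] M →ₗ[R] R) (D : End R M) : Prop :=
  ∀ x y, B (D x) y = ω x y

theorem exists_representsForm {K M : Type*} [Field K] [AddCommGroup M] [Module K M]
    [FiniteDimensional K M] {B : M →ₗ[K] M →ₗ[K] K} (hB : B.Nondegenerate)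
    (ω : M →ₗ[K] M →ₗ[K] K) : ∃ D, RepresentsForm B ω D :=
  ⟨LinearMap.BilinForm.symmCompOfNondegenerate ω B hB,
    fun x y => LinearMap.BilinForm.symmCompOfNondegenerate_left_apply ω hB y x⟩

namespace RepresentsForm

variable {R M : Type*} [CommRing R] [AddCommGroup M] [Module R M] {B ω : M →ₗ[R] M →ₗ[R] R}
  {D : End R M}

theorem injective (h : RepresentsForm B ω D) (hω : ω.SeparatingLeft) : Function.Injective D :=
  (injective_iff_map_eq_zero D).mpr fun x hx => hω x fun y => by
    rw [← h, hx, map_zero, LinearMap.zero_apply]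

theorem isLeibniz_zero_left (h : RepresentsForm B ω D) (hB : ∀ x y, B x y = B y x)
    (hω : ∀ x y, ω x y = -ω y x) : IsLeibniz B D D 0 := by
  intro x y
  rw [h, hB x (D y), h, hω x y, neg_add_cancel, LinearMap.zero_apply]

theorem isLeibniz_zero_right (h : RepresentsForm B ω D) (hB : IsLeibniz B D D 0) :
    IsLeibniz ω D D 0 := by
  intro x y
  rw [← h, ← h, ← h]
  exact hB (D x) y

theorem isLeibniz_mul {A : Type*} [NonUnitalNonAssocRing A] [Module R A] [SMulCommClass R A A]
    [IsScalarTower R A A] {B ω : A →ₗ[R] A →ₗ[R] R} {D : End R A} (h : RepresentsForm B ω D)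
    (hB : ∀ x y, B x y = B y x) (hBsep : B.SeparatingLeft)
    (hassoc : ∀ x y z, B (x * y) z = B x (y * z)) (hω : ∀ x y, ω x y = -ω y x)
    (hcyc : ∀ x y z, ω (x * y) z + ω (y * z) x + ω (z * x) y = 0) :
    IsLeibniz (LinearMap.mul R A) D D D := by
  refine fun x y => sub_eq_zero.mp (hBsep _ fun z => ?_)
  have hleft : B (D x * y) z = -ω (y * z) x := by rw [hassoc, h, hω]
  have hright : B (x * D y) z = -ω (z * x) y := by rw [hB, ← hassoc, hB, h, hω]
  simp only [LinearMap.mul_apply', map_sub, map_add, LinearMap.sub_apply, LinearMap.add_apply,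
    h (x * y) z, hleft, hright]
  linear_combination hcyc x y z

end RepresentsForm

end RepresentsForm

section PositivePart

/-- The elements on which an additive map `φ` to `ℚ` is positive, as an additive semigroup.
The elements on which `φ` is negative are `positivePart (-φ)`. -/
def positivePart {A : Type*} [AddCommGroup A] (φ : A →+ ℚ) : AddSubsemigroup A where
  carrier := {a | 0 < φ a}
  add_mem' ha hb := by
    rw [Set.mem_ofPred_eq, map_add]
    exact add_pos ha hb

variable {A : Type*} [AddCommGroup A] (φ : A →+ ℚ)

theorem mem_positivePart {a : A} : a ∈ positivePart φ ↔ 0 < φ a :=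
  Iff.rfl

theorem zero_notMem_positivePart : 0 ∉ positivePart φ := by
  simp [mem_positivePart]

theorem disjoint_positivePart_neg :
    Disjoint (positivePart φ : Set A) (positivePart (-φ) : Set A) :=
  Set.disjoint_left.mpr fun a ha hna => lt_asymm ha (neg_pos.mp (show 0 < -φ a from hna))

theorem mem_positivePart_union_neg {a : A} (ha : φ a ≠ 0) :
    a ∈ (positivePart φ ∪ positivePart (-φ) : Set A) :=
  ha.lt_or_gt.symm.imp_right neg_pos.mpr

end PositivePart

theorem exists_addMonoidHom_rat_forall_hasEigenvalue_ne_zero {K M : Type*} [Field K] [CharZero K]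
    [AddCommGroup M] [Module K M] [FiniteDimensional K M] {D : End K M}
    (hD : Function.Injective D) : ∃ φ : K →+ ℚ, ∀ a, D.HasEigenvalue a → φ a ≠ 0 := by
  have : Finite {a // D.HasEigenvalue a} := D.finite_hasEigenvalue
  obtain ⟨φ, hφ⟩ := exists_dual_forall_apply_ne_zero (K := ℚ)
    (fun a : {a // D.HasEigenvalue a} => (a : K))
    fun a => ne_zero_of_hasEigenvalue_of_injective hD a.2
  exact ⟨φ.toAddMonoidHom, fun a ha => hφ ⟨a, ha⟩⟩

theorem symplectic_pseudoEuclidean_is_jordan_manin_general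
    {K A : Type*} [Field K] [IsAlgClosed K] [CharZero K] [NonUnitalNonAssocRing A] [Module K A]
    [SMulCommClass K A A] [IsScalarTower K A A] [FiniteDimensional K A]
    (B : A →ₗ[K] A →ₗ[K] K)
    (hsymm : ∀ x y : A, B x y = B y x)
    (hBnondeg : ∀ x : A, (∀ y : A, B x y = 0) → x = 0)
    (hassoc : ∀ x y z : A, B (x * y) z = B x (y * z))
    (ω : A →ₗ[K] A →ₗ[K] K)
    (hskew : ∀ x y : A, ω x y = -ω y x)
    (hωnondeg : ∀ x : A, (∀ y : A, ω x y = 0) → x = 0)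
    (hcyc : ∀ x y z : A, ω (x * y) z + ω (y * z) x + ω (z * x) y = 0) :
    ∃ U V : Submodule K A,
      (∀ x ∈ U, ∀ y ∈ U, x * y ∈ U) ∧
      (∀ x ∈ V, ∀ y ∈ V, x * y ∈ V) ∧
      IsCompl U V ∧
      (∀ x ∈ U, ∀ y ∈ U, B x y = 0) ∧
      (∀ x ∈ V, ∀ y ∈ V, B x y = 0) ∧
      (∀ x ∈ U, ∀ y ∈ U, ω x y = 0) ∧
      (∀ x ∈ V, ∀ y ∈ V, ω x y = 0) := by
  have hB : B.Nondegenerate :=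
    (LinearMap.IsSymm.mk hsymm).isRefl.nondegenerate_iff_separatingLeft.mpr hBnondeg
  obtain ⟨D, hD⟩ := exists_representsForm hB ω
  have hmul := hD.isLeibniz_mul hsymm hBnondeg hassoc hskew hcyc
  have hBskew := hD.isLeibniz_zero_left hsymm hskew
  have hωskew := hD.isLeibniz_zero_right hBskew
  obtain ⟨φ, hφ⟩ := exists_addMonoidHom_rat_forall_hasEigenvalue_ne_zero (hD.injective hωnondeg)
  have hpos := zero_notMem_positivePart φ
  have hneg := zero_notMem_positivePart (-φ)
  exact ⟨spectralSubspace D (positivePart φ), spectralSubspace D (positivePart (-φ)),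
    fun _ hx _ hy => hmul.apply_mem_spectralSubspace _ hx hy,
    fun _ hx _ hy => hmul.apply_mem_spectralSubspace _ hx hy,
    isCompl_spectralSubspace D.iSup_maxGenEigenspace_eq_top (disjoint_positivePart_neg φ)
      fun a ha => mem_positivePart_union_neg φ (hφ a ha),
    fun _ hx _ hy => hBskew.apply_eq_zero_of_mem_spectralSubspace hpos hx hy,
    fun _ hx _ hy => hBskew.apply_eq_zero_of_mem_spectralSubspace hneg hx hy,
    fun _ hx _ hy => hωskew.apply_eq_zero_of_mem_spectralSubspace hpos hx hy,
    fun _ hx _ hy => hωskew.apply_eq_zero_of_mem_spectralSubspace hneg hx hy⟩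

/-- every symplectic pseudo-euclidean Jordan algebra `(J, B, ω)` over `ℂ`
is a symplectic Jordan-Manin algebra: `J = U ⊕ V` with `U`, `V` subalgebras that are
totally isotropic for both `B` and `ω`. -/
theorem symplectic_pseudoEuclidean_is_jordan_manin
    {J : Type*} [NonUnitalNonAssocCommRing J] [Module ℂ J]
    [SMulCommClass ℂ J J] [IsScalarTower ℂ J J] [FiniteDimensional ℂ J]
    (hjordan : ∀ x y : J, (x * y) * (x * x) = x * (y * (x * x)))
    (B : J →ₗ[ℂ] J →ₗ[ℂ] ℂ)
    (hsymm : ∀ x y : J, B x y = B y x)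
    (hBnondeg : ∀ x : J, (∀ y : J, B x y = 0) → x = 0)
    (hassoc : ∀ x y z : J, B (x * y) z = B x (y * z))
    (ω : J →ₗ[ℂ] J →ₗ[ℂ] ℂ)
    (hskew : ∀ x y : J, ω x y = -ω y x)
    (hωnondeg : ∀ x : J, (∀ y : J, ω x y = 0) → x = 0)
    (hcyc : ∀ x y z : J, ω (x * y) z + ω (y * z) x + ω (z * x) y = 0) :
    ∃ U V : Submodule ℂ J,
      (∀ x ∈ U, ∀ y ∈ U, x * y ∈ U) ∧
      (∀ x ∈ V, ∀ y ∈ V, x * y ∈ V) ∧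
      IsCompl U V ∧
      (∀ x ∈ U, ∀ y ∈ U, B x y = 0) ∧
      (∀ x ∈ V, ∀ y ∈ V, B x y = 0) ∧
      (∀ x ∈ U, ∀ y ∈ U, ω x y = 0) ∧
      (∀ x ∈ V, ∀ y ∈ V, ω x y = 0) :=
  symplectic_pseudoEuclidean_is_jordan_manin_general B hsymm hBnondeg hassoc ω hskew hωnondeg hcyc
end

section
/- Let J be a Jordan algebra over a field K of characteristic zero and let π : J → End(V) be a representation of J on a finite-dimensional vector space V. Then the bilinear form B_π : J × J → K defined by B_π(x, y) = tr(π(xy)) is symmetric and associative, i.e., B_π(xy, z) = B_π(x, yz) for all x, y, z ∈ J. -/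
/-!
Polarizing the identity `2π(xy)π(x) + π(x²)π(y) - 2π(x)π(y)π(x) - π(x²y) = 0` in `x` expresses
`2π((xy)z)` as a sum of products of values of `π`. A trace takes this sum to a quantity invariant
under cyclic permutations of `x`, `y`, `z`: the terms `π(xy)π(z)`, `π(yz)π(x)` and `π(xz)π(y)` are
permuted, and each of the two triple products keeps its cyclic order. Hence `(xy)z` and `(yz)x`
have the same trace.
-/

section

variable {J A M : Type*} [NonUnitalNonAssocCommRing J] [NonUnitalRing A] [AddCommGroup M]

theorem two_nsmul_rep_mul_mul (π : J →+ A)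
    (hrep : ∀ x y : J,
      2 • (π (x * y) * π x) + π (x * x) * π y - 2 • (π x * (π y * π x)) - π ((x * x) * y) = 0)
    (x y z : J) :
    2 • π ((x * y) * z) =
      2 • (π (x * y) * π z + π (y * z) * π x + π (x * z) * π y
        - π x * (π z * π y) - π y * (π z * π x)) := by
  have hx := hrep x z
  have hy := hrep y z
  have hxy := hrep (x + y) z
  simp only [add_mul, mul_add, map_add, mul_comm y x] at hxy
  linear_combination (norm := abel) hx + hy - hxy

theorem two_nsmul_trace_rep_mul_assoc (π : J →+ A)
    (hrep : ∀ x y : J,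
      2 • (π (x * y) * π x) + π (x * x) * π y - 2 • (π x * (π y * π x)) - π ((x * x) * y) = 0)
    (τ : A →+ M) (hτ : ∀ a b : A, τ (a * b) = τ (b * a)) (x y z : J) :
    2 • τ (π ((x * y) * z)) = 2 • τ (π (x * (y * z))) := by
  have hcycle (a b c : A) : τ (a * (b * c)) = τ (b * (c * a)) := by rw [hτ, mul_assoc]
  rw [mul_comm x (y * z), ← map_nsmul τ, ← map_nsmul τ, two_nsmul_rep_mul_mul π hrep x y z,
    two_nsmul_rep_mul_mul π hrep y z x, mul_comm z x, mul_comm y x]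
  simp only [map_nsmul, map_add, map_sub]
  rw [hcycle (π z) (π x) (π y), hcycle (π x) (π y) (π z), hcycle (π y) (π x) (π z)]
  abel

theorem trace_form_symmetric_and_associative_general
    (hM : IsSMulRegular M (2 : ℕ)) (π : J →+ A)
    (hrep : ∀ x y : J,
      2 • (π (x * y) * π x) + π (x * x) * π y - 2 • (π x * (π y * π x)) - π ((x * x) * y) = 0)
    (τ : A →+ M) (hτ : ∀ a b : A, τ (a * b) = τ (b * a)) :
    (∀ x y : J, τ (π (x * y)) = τ (π (y * x))) ∧
    (∀ x y z : J, τ (π ((x * y) * z)) = τ (π (x * (y * z)))) :=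
  ⟨fun x y => by rw [mul_comm], fun x y z => hM (two_nsmul_trace_rep_mul_assoc π hrep τ hτ x y z)⟩

end

/-- for a representation `π` of a Jordan algebra `J` on a finite-dimensional
vector space `V`, the trace form `B_π(x, y) = tr(π(xy))` is symmetric and associative. -/
theorem trace_form_symmetric_and_associative
    {K : Type*} [Field K] [CharZero K]
    {J : Type*} [NonUnitalNonAssocCommRing J] [Module K J]
    [SMulCommClass K J J] [IsScalarTower K J J] [FiniteDimensional K J]
    {V : Type*} [AddCommGroup V] [Module K V] [FiniteDimensional K V]
    (hjordan : ∀ x y : J, (x * y) * (x * x) = x * (y * (x * x)))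
    (π : J →ₗ[K] Module.End K V)
    (hrep1 : ∀ x : J, π (x * x) * π x = π x * π (x * x))
    (hrep2 : ∀ x y : J,
      2 • (π (x * y) * π x) + π (x * x) * π y - 2 • (π x * (π y * π x)) -
          π ((x * x) * y) = 0) :
    (∀ x y : J,
      LinearMap.trace K V (π (x * y)) = LinearMap.trace K V (π (y * x))) ∧
    (∀ x y z : J,
      LinearMap.trace K V (π ((x * y) * z)) = LinearMap.trace K V (π (x * (y * z)))) :=
  trace_form_symmetric_and_associative_general (IsSMulRegular.of_ne_zero two_ne_zero)
    (π : J →+ Module.End K V) hrep2 (LinearMap.trace K V : Module.End K V →+ K)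
    (LinearMap.trace_mul_comm K)
end
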